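/- arXiv:2107.00794 — 2 statements merged into one kernel-verified Lean document; each statement's English description precedes it below -/
import Mathlib

section
/- (P. Hall) Every finitely generated abelian-by-nilpotent group is residually finite. That is, if $G$ is a finitely generated group admitting a normal abelian subgroup $A \trianglelefteq G$ such that $G/A$ is nilpotent, then the intersection of all finite-index normal subgroups of $G$ is the trivial subgroup. -/
/-!
By Zorn's lemma it suffices to show that `G` is finite if some `x ≠ 1` lies in all its nontrivial
normal subgroups. Some term `B` of the lower central series of `G` is abelian. It is generated by
finitely many elements as a module over the group `Q` of automorphisms that `G` induces on it, and
`Q` is nilpotent since `B` acts trivially on itself.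

For a module over a group ring `J[Q]` generated by a finitely generated `J`-submodule `V`, build `Q`
up by cyclic extensions `H ⊔ ⟨t⟩`. An invariant submodule is determined by its leading coefficients
with respect to `t`, as in Hilbert's basis theorem, so the module is Noetherian over `J[Q]`. The
same filtration by powers of `t` shows that multiplication by `q` is injective modulo `V` for all
`q` coprime to a suitable element of `J`, depending on `V`.

Take `V = J x` in `B`. Since `x ∈ q B` whenever `q x ≠ 0`, such `q` are invertible modulo the
annihilator `P` of `x`. If `J` is a finitely generated ring, it is Jacobson, so `P` is maximal and
`J ⧸ P` is finite. By Noetherianity `P` acts nilpotently on `B`, so `J` acts on `B` through a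
finite ring. With `J = ℤ[X]` and `X` acting as an element of the centre of `Q`, this shows that the
centre of `Q` is torsion. Thus `Q` is finite, and with `J = ℤ` so is `B`. Finally, a power of each
element of `G` that is central modulo `B` is central in `G`, hence of finite order because `x` is
in every nontrivial central cyclic subgroup. So the nilpotent group `G ⧸ B` is finite as well.
-/

open Filter Pointwise
open MulAction (stabilizer)
open scoped Polynomial

theorem inf_sup_le_of_inf_sup_le_sup {α : Type*} [Lattice α] [IsModularLattice α] {x y v e : α}
    (hxy : x ≤ y) (hv : v ⊓ (y ⊔ e) ≤ x ⊔ e) (he : y ⊓ e ≤ x) : y ⊓ (v ⊔ e) ≤ x := by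
  have h : y ⊓ (v ⊔ e) ≤ x ⊔ e :=
    calc y ⊓ (v ⊔ e) ≤ (e ⊔ v) ⊓ (y ⊔ e) := by rw [inf_comm, sup_comm]; gcongr; exact le_sup_left
      _ = e ⊔ v ⊓ (y ⊔ e) := sup_inf_assoc_of_le v le_sup_right
      _ ≤ x ⊔ e := sup_le le_sup_right hv
  calc y ⊓ (v ⊔ e) ≤ (x ⊔ e) ⊓ y := le_inf h inf_le_left
    _ = x ⊔ e ⊓ y := sup_inf_assoc_of_le e hxy
    _ ≤ x := sup_le le_rfl (inf_comm y e ▸ he)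

theorem exists_forall_ge_eq_of_monotone_monotone {α : Type*} [PartialOrder α] [WellFoundedGT α]
    {L : ℕ → ℕ → α} (hL : ∀ n, Monotone (L n)) (hL' : ∀ k, Monotone (L · k)) :
    ∃ K, ∀ k ≥ K, ∀ n, L n k = L n K := by
  obtain ⟨D, hD⟩ := WellFoundedGT.monotone_chain_condition
    ⟨fun m ↦ L m m, fun a b h ↦ (hL a h).trans (hL' b h)⟩
  have h_large {n k : ℕ} (hn : D ≤ n) (hk : D ≤ k) : L n k = L D D := by
    apply le_antisymm
    · rw [show L D D = L (max n k) (max n k) from hD _ (hn.trans (le_max_left n k))]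
      exact (hL n (le_max_right n k)).trans (hL' _ (le_max_left n k))
    · exact (hL D hk).trans (hL' k hn)
  choose s hs using fun n ↦ WellFoundedGT.monotone_chain_condition ⟨L n, hL n⟩
  refine ⟨max D ((Finset.range D).sup s), fun k hk n ↦ ?_⟩
  obtain hn | hn := lt_or_ge n D
  · have h_le : s n ≤ max D ((Finset.range D).sup s) :=
      (Finset.le_sup (Finset.mem_range.mpr hn)).trans (le_max_right _ _)
    exact (hs n k (h_le.trans hk)).symm.trans (hs n _ h_le)
  · rw [h_large hn ((le_max_left _ _).trans hk), h_large hn (le_max_left _ _)]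

/-- The filter of elements of `S` that are sufficiently coprime: a property holds eventually along
it if, for some `s ∈ S`, it holds for all elements of `S` coprime to `s`. -/
def coprimeFilter {J : Type*} [CommSemiring J] (S : Submonoid J) : Filter J :=
  ⨅ s : S, 𝓟 {q | q ∈ S ∧ IsCoprime q s}

theorem eventually_coprimeFilter_iff {J : Type*} [CommSemiring J] {S : Submonoid J}
    {p : J → Prop} :
    (∀ᶠ q in coprimeFilter S, p q) ↔ ∃ s ∈ S, ∀ q ∈ S, IsCoprime q s → p q := by
  have h_directed : Directed (· ⊇ ·) fun s : S ↦ {q | q ∈ S ∧ IsCoprime q (s : J)} := fun s s' ↦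
    ⟨s * s', fun _ hq ↦ ⟨hq.1, hq.2.of_mul_right_left⟩,
      fun _ hq ↦ ⟨hq.1, hq.2.of_mul_right_right⟩⟩
  simp [coprimeFilter, (hasBasis_iInf_principal h_directed).eventually_iff]

section Stabilizer

variable {G J M : Type*} [Group G] [Ring J] [AddCommGroup M] [Module J M]
  [DistribMulAction G M] [SMulCommClass G J M] {H : Subgroup G}
  {U V : Submodule J M}

theorem smul_mem_smul_submodule_iff (g : G) {m : M} : g • m ∈ g • V ↔ m ∈ V :=
  Set.smul_mem_smul_set_iff

theorem smul_mem_iff_of_mem_stabilizer {g : G} (hg : g ∈ stabilizer G V) {m : M} :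
    g • m ∈ V ↔ m ∈ V := by
  have h := smul_mem_smul_submodule_iff g (V := V) (m := m)
  rwa [MulAction.mem_stabilizer_iff.mp hg] at h

theorem le_stabilizer_iff : H ≤ stabilizer G V ↔ ∀ h ∈ H, ∀ v ∈ V, h • v ∈ V := by
  refine ⟨fun hV h hh v hv ↦ hV hh ▸ Submodule.smul_mem_pointwise_smul v h V hv,
    fun hV h hh ↦ le_antisymm ?_ fun v hv ↦ ?_⟩
  · rintro _ ⟨v, hv, rfl⟩
    exact hV h hh v hv
  · rw [Submodule.mem_smul_pointwise_iff_exists]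
    exact ⟨h⁻¹ • v, hV _ (inv_mem hh) v hv, smul_inv_smul h v⟩

theorem le_stabilizer_bot : H ≤ stabilizer G (⊥ : Submodule J M) := by
  simp only [le_stabilizer_iff, Submodule.mem_bot, forall_eq, smul_zero, implies_true]

theorem le_stabilizer_top : H ≤ stabilizer G (⊤ : Submodule J M) :=
  le_stabilizer_iff.mpr fun _ _ _ _ ↦ Submodule.mem_top

theorem le_stabilizer_inf (hU : H ≤ stabilizer G U) (hV : H ≤ stabilizer G V) :
    H ≤ stabilizer G (U ⊓ V) := by
  rw [le_stabilizer_iff] at *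
  exact fun h hh v hv ↦ ⟨hU h hh v hv.1, hV h hh v hv.2⟩

theorem le_stabilizer_sup (hU : H ≤ stabilizer G U) (hV : H ≤ stabilizer G V) :
    H ≤ stabilizer G (U ⊔ V) := fun h hh ↦ by
  rw [MulAction.mem_stabilizer_iff, Submodule.smul_sup', hU hh, hV hh]

theorem le_stabilizer_iSup {ι : Sort*} {U : ι → Submodule J M}
    (hU : ∀ i, H ≤ stabilizer G (U i)) : H ≤ stabilizer G (⨆ i, U i) := fun h hh ↦ by
  rw [MulAction.mem_stabilizer_iff, Submodule.smul_iSup']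
  exact iSup_congr fun i ↦ hU i hh

theorem le_stabilizer_smul [H.Normal] (hV : H ≤ stabilizer G V) (g : G) :
    H ≤ stabilizer G (g • V) := by
  rw [MulAction.stabilizer_smul_eq_stabilizer_map_conj, ← Subgroup.Normal.conj_smul_eq_self g H]
  exact Subgroup.map_mono hV

theorem le_stabilizer_comap (φ : Module.End J M) (hφ : ∀ (g : G) m, φ (g • m) = g • φ m)
    (hV : H ≤ stabilizer G V) : H ≤ stabilizer G (V.comap φ) := by
  rw [le_stabilizer_iff] at *
  intro h hh v hv
  rw [Submodule.mem_comap, hφ]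
  exact hV h hh _ hv

theorem le_stabilizer_map (φ : Module.End J M) (hφ : ∀ (g : G) m, φ (g • m) = g • φ m)
    (hV : H ≤ stabilizer G V) : H ≤ stabilizer G (V.map φ) := by
  rw [le_stabilizer_iff] at *
  rintro h hh _ ⟨v, hv, rfl⟩
  exact ⟨h • v, hV h hh v hv, hφ h v⟩

end Stabilizer

section Noetherian

variable {G J M : Type*} [Group G] [Ring J] [AddCommGroup M] [Module J M]
  [DistribMulAction G M] [SMulCommClass G J M]

/-- The `J`-submodules of `V` invariant under the subgroup `H` satisfy the ascending chain
condition. For `V` itself invariant, this says that `V` is Noetherian as a module over the group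
ring `J[H]`. -/
def InvariantNoetherian (H : Subgroup G) (V : Submodule J M) : Prop :=
  WellFoundedGT {U : Submodule J M // H ≤ stabilizer G U ∧ U ≤ V}

theorem invariantNoetherian_of_fg [IsNoetherianRing J] (H : Subgroup G) {V : Submodule J M}
    (hV : V.FG) : InvariantNoetherian H V := by
  have : IsNoetherian J V := isNoetherian_of_fg_of_noetherian V hV
  have : WellFoundedGT (Set.Iic V) := (Submodule.mapIic V).symm.strictMono.wellFoundedGT
  exact StrictMono.wellFoundedGT (β := Set.Iic V)
    (f := fun U : {U : Submodule J M // H ≤ stabilizer G U ∧ U ≤ V} ↦ ⟨U, U.2.2⟩) fun _ _ h ↦ h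

variable {H : Subgroup G} {V : Submodule J M}

theorem InvariantNoetherian.exists_forall_ge_inf_eq (h : InvariantNoetherian H V)
    (hV : H ≤ stabilizer G V) {U : ℕ → ℕ → Submodule J M} (hU : ∀ n k, H ≤ stabilizer G (U n k))
    (h_mono : ∀ n, Monotone (U n)) (h_mono' : ∀ k, Monotone (U · k)) :
    ∃ K, ∀ k ≥ K, ∀ n, V ⊓ U n k = V ⊓ U n K := by
  have : WellFoundedGT {U : Submodule J M // H ≤ stabilizer G U ∧ U ≤ V} := h
  let L (n k : ℕ) : {U : Submodule J M // H ≤ stabilizer G U ∧ U ≤ V} :=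
    ⟨V ⊓ U n k, le_stabilizer_inf hV (hU n k), inf_le_left⟩
  obtain ⟨K, hK⟩ := exists_forall_ge_eq_of_monotone_monotone (L := L)
    (fun n _ _ hab ↦ inf_le_inf_left V (h_mono n hab))
    (fun k _ _ hab ↦ inf_le_inf_left V (h_mono' k hab))
  exact ⟨K, fun k hk n ↦ congrArg Subtype.val (hK k hk n)⟩

/-- The sum of the translates `t ^ i • V` of a submodule `V`, for `i` in a set of integers. -/
def translates (t : G) (V : Submodule J M) (s : Set ℤ) : Submodule J M :=
  ⨆ i ∈ s, t ^ i • V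

variable {t : G}

theorem translates_mono {s s' : Set ℤ} (h : s ⊆ s') : translates t V s ≤ translates t V s' :=
  biSup_mono h

theorem translates_zero : translates t V {0} = V := by
  rw [translates, iSup_singleton, zpow_zero, one_smul]

theorem translates_union (s s' : Set ℤ) :
    translates t V (s ∪ s') = translates t V s ⊔ translates t V s' :=
  iSup_union

theorem le_translates {s : Set ℤ} (h : 0 ∈ s) : V ≤ translates t V s := by
  conv_lhs => rw [← translates_zero (t := t) (V := V)]
  exact translates_mono (Set.singleton_subset_iff.mpr h)

theorem zpow_smul_translates (i : ℤ) (s : Set ℤ) :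
    t ^ i • translates t V s = translates t V ((i + ·) '' s) := by
  simp only [translates, Submodule.smul_iSup', smul_smul, ← zpow_add, iSup_image]

theorem zpow_smul_translates_Icc (i a b : ℤ) :
    t ^ i • translates t V (Set.Icc a b) = translates t V (Set.Icc (i + a) (i + b)) := by
  rw [zpow_smul_translates, Set.image_const_add_Icc]

theorem zpow_smul_mem_translates_Icc {i a b : ℤ} {m : M} :
    t ^ i • m ∈ translates t V (Set.Icc a b) ↔ m ∈ translates t V (Set.Icc (a - i) (b - i)) := by
  rw [← smul_mem_smul_submodule_iff (t ^ i) (V := translates t V (Set.Icc (a - i) (b - i))),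
    zpow_smul_translates_Icc, add_sub_cancel, add_sub_cancel]

theorem sup_translates (s : Set ℤ) : V ⊔ translates t V s = translates t V (insert 0 s) := by
  rw [Set.insert_eq, translates_union, translates_zero]

theorem sup_translates_neg (n : ℕ) :
    V ⊔ translates t V (Set.Icc (-n) (-1)) = translates t V (Set.Icc (-n) 0) := by
  rw [sup_translates]
  congr 1
  ext i
  simp only [Set.mem_insert_iff, Set.mem_Icc]
  omega

theorem sup_translates_pos (n : ℕ) :
    V ⊔ translates t V (Set.Icc 1 n) = translates t V (Set.Icc 0 n) := by
  rw [sup_translates]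
  congr 1
  ext i
  simp only [Set.mem_insert_iff, Set.mem_Icc]
  omega

theorem le_stabilizer_translates [H.Normal] (hV : H ≤ stabilizer G V) (s : Set ℤ) :
    H ≤ stabilizer G (translates t V s) :=
  le_stabilizer_iSup fun i ↦ le_stabilizer_iSup fun _ ↦ le_stabilizer_smul hV (t ^ i)

theorem sup_zpowers_le_stabilizer_translates_univ [H.Normal] (hV : H ≤ stabilizer G V) :
    H ⊔ Subgroup.zpowers t ≤ stabilizer G (translates t V Set.univ) := by
  refine sup_le (le_stabilizer_translates hV _) (Subgroup.zpowers_le.mpr ?_)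
  rw [MulAction.mem_stabilizer_iff]
  have := zpow_smul_translates (t := t) (V := V) 1 Set.univ
  rwa [Set.image_univ, (add_left_surjective (1 : ℤ)).range_eq, zpow_one] at this

theorem translates_univ_eq_iSup :
    translates t V Set.univ = ⨆ n : ℕ, translates t V (Set.Icc (-n) n) := by
  refine le_antisymm (iSup₂_le fun i _ ↦ ?_) (iSup_le fun n ↦ translates_mono (Set.subset_univ _))
  refine le_iSup_of_le i.natAbs (le_iSup₂_of_le i ?_ le_rfl)
  rw [Set.mem_Icc]
  omega

theorem mem_translates_univ {m : M} :
    m ∈ translates t V Set.univ ↔ ∃ n : ℕ, m ∈ translates t V (Set.Icc (-n) n) := by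
  rw [translates_univ_eq_iSup, Submodule.mem_iSup_of_directed]
  refine Monotone.directed_le fun a b h ↦ translates_mono (Set.Icc_subset_Icc ?_ ?_) <;> omega

/- `V ⊓ (Y ⊔ translates t V (Set.Icc (-n) (-1)))` consists of the leading coefficients `v 0` of the
elements `∑ i ∈ [-n, 0], t ^ i • v i` of `Y`. -/
theorem le_of_forall_inf_sup_translates_le {X Y : Submodule J M} (hXY : X ≤ Y)
    (hY : Y ≤ translates t V Set.univ) (hXt : t ∈ stabilizer G X) (hYt : t ∈ stabilizer G Y)
    (h : ∀ n : ℕ, V ⊓ (Y ⊔ translates t V (Set.Icc (-n) (-1))) ≤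
      X ⊔ translates t V (Set.Icc (-n) (-1))) : Y ≤ X := by
  have h_past (n : ℕ) : Y ⊓ translates t V (Set.Icc (-n) (-1)) ≤ X := by
    induction n with
    | zero => simp [translates]
    | succ n ih =>
      intro y hy
      have h_shift : t ^ (1 : ℤ) • y ∈ Y ⊓ (V ⊔ translates t V (Set.Icc (-n) (-1))) := by
        rw [sup_translates_neg]
        refine ⟨(smul_mem_iff_of_mem_stabilizer (zpow_mem hYt 1)).mpr hy.1,
          zpow_smul_mem_translates_Icc.mpr (translates_mono (Set.Icc_subset_Icc ?_ ?_) hy.2)⟩ <;>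
          omega
      exact (smul_mem_iff_of_mem_stabilizer (zpow_mem hXt 1)).mp
        (inf_sup_le_of_inf_sup_le_sup hXY (h n) ih h_shift)
  intro y hy
  obtain ⟨n, hn⟩ := mem_translates_univ.mp (hY hy)
  refine (smul_mem_iff_of_mem_stabilizer (zpow_mem hXt (-(n + 1)))).mp
    (h_past (2 * n + 1) ⟨(smul_mem_iff_of_mem_stabilizer (zpow_mem hYt _)).mpr hy,
      zpow_smul_mem_translates_Icc.mpr (translates_mono (Set.Icc_subset_Icc ?_ ?_) hn)⟩) <;>
    push_cast <;> omega

theorem InvariantNoetherian.translates_univ [H.Normal] (h : InvariantNoetherian H V)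
    (hV : H ≤ stabilizer G V) :
    InvariantNoetherian (H ⊔ Subgroup.zpowers t) (translates t V Set.univ) := by
  refine wellFoundedGT_iff_monotone_chain_condition.mpr fun f ↦ ?_
  have hfH (k : ℕ) : H ≤ stabilizer G (f k : Submodule J M) := le_sup_left.trans (f k).2.1
  have hft (k : ℕ) : t ∈ stabilizer G (f k : Submodule J M) :=
    Subgroup.zpowers_le.mp (le_sup_right.trans (f k).2.1)
  obtain ⟨K, hK⟩ := h.exists_forall_ge_inf_eq hV
    (U := fun n k ↦ f k ⊔ translates t V (Set.Icc (-n) (-1)))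
    (fun n k ↦ le_stabilizer_sup (hfH k) (le_stabilizer_translates hV _))
    (fun n a b hab ↦ sup_le_sup_right (f.monotone hab) _)
    (fun k a b hab ↦ sup_le_sup_left (translates_mono (Set.Icc_subset_Icc (by omega) le_rfl)) _)
  refine ⟨K, fun k hk ↦ le_antisymm (f.monotone hk) ?_⟩
  exact le_of_forall_inf_sup_translates_le (f.monotone hk) (f k).2.2 (hft K) (hft k)
    fun n ↦ (hK k hk n).trans_le inf_le_right

end Noetherian

section SMulReflects

variable {G J M : Type*} [Group G] [CommRing J] [AddCommGroup M] [Module J M]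
  [DistribMulAction G M] [SMulCommClass G J M] {q : J} {A B C V W : Submodule J M}

/-- Multiplication by `q` is injective on `(A + B) / B`. -/
def SMulReflects (q : J) (A B : Submodule J M) : Prop :=
  ∀ m ∈ A, q • m ∈ B → m ∈ B

theorem SMulReflects.trans (h : SMulReflects q A B) (h' : SMulReflects q B C) (hCB : C ≤ B) :
    SMulReflects q A C :=
  fun m hm hqm ↦ h' m (h m hm (hCB hqm)) hqm

theorem SMulReflects.sup_right (h : SMulReflects q A B) : SMulReflects q (A ⊔ B) B := by
  intro m hm hqm
  obtain ⟨a, ha, b, hb, rfl⟩ := Submodule.mem_sup.mp hm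
  rw [smul_add] at hqm
  exact add_mem (h a ha ((B.add_mem_iff_left (B.smul_mem q hb)).mp hqm)) hb

theorem SMulReflects.smul (h : SMulReflects q A B) (g : G) : SMulReflects q (g • A) (g • B) := by
  rintro _ ⟨m, hm, rfl⟩ hqm
  rw [SetLike.mem_coe] at hm
  change g • m ∈ g • B
  change q • g • m ∈ g • B at hqm
  rw [← smul_comm, smul_mem_smul_submodule_iff] at hqm
  exact (smul_mem_smul_submodule_iff g).mpr (h m hm hqm)

theorem smulReflects_of_isCoprime {s : J} (hqs : IsCoprime q s)
    (h : ∀ m ∈ A, (s * q) • m ∈ B → s • m ∈ B) : SMulReflects q A B := by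
  intro m hm hqm
  obtain ⟨a, b, hab⟩ := hqs
  have hsm : s • m ∈ B := h m hm (mul_smul s q m ▸ B.smul_mem s hqm)
  rw [← one_smul J m, ← hab, add_smul, mul_smul, mul_smul]
  exact add_mem (B.smul_mem a hqm) (B.smul_mem b hsm)

variable {H : Subgroup G}

theorem InvariantNoetherian.eventually_smulReflects (h : InvariantNoetherian H V)
    (hV : H ≤ stabilizer G V) (hW : H ≤ stabilizer G W) (S : Submonoid J) :
    ∀ᶠ q in coprimeFilter S, SMulReflects q V W := by
  let T (s : S) : {U : Submodule J M // H ≤ stabilizer G U ∧ U ≤ V} :=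
    ⟨V ⊓ W.comap (LinearMap.lsmul J M s),
      le_stabilizer_inf hV (le_stabilizer_comap (LinearMap.lsmul J M s)
        (fun g m ↦ (smul_comm g (s : J) m).symm) hW), inf_le_left⟩
  have hT (s s' : S) : T s ≤ T (s * s') := by
    refine inf_le_inf_left V fun m hm ↦ ?_
    simpa only [Submodule.mem_comap, LinearMap.lsmul_apply, Submonoid.coe_mul, mul_comm (s : J),
      mul_smul] using W.smul_mem (s' : J) hm
  have : WellFoundedGT {U : Submodule J M // H ≤ stabilizer G U ∧ U ≤ V} := h
  obtain ⟨_, ⟨s, rfl⟩, hs⟩ := wellFounded_gt.has_min (Set.range T) (Set.range_nonempty T)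
  refine eventually_coprimeFilter_iff.mpr ⟨s, s.2, fun q hq hqs ↦ smulReflects_of_isCoprime hqs ?_⟩
  have h_eq : T (s * ⟨q, hq⟩) = T s := (hT s ⟨q, hq⟩).eq_of_not_lt' (hs _ ⟨_, rfl⟩)
  intro m hm hqm
  exact (h_eq.le ⟨hm, hqm⟩ : m ∈ V ⊓ W.comap (LinearMap.lsmul J M s)).2

theorem InvariantNoetherian.eventually_forall_smulReflects (h : InvariantNoetherian H V)
    (hV : H ≤ stabilizer G V) {U : ℕ → Submodule J M} (hU : ∀ n, H ≤ stabilizer G (U n))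
    (h_mono : Monotone U) (S : Submonoid J) :
    ∀ᶠ q in coprimeFilter S, ∀ n, SMulReflects q V (U n) := by
  obtain ⟨K, hK⟩ := h.exists_forall_ge_inf_eq hV (U := fun _ ↦ U) (fun _ ↦ hU) (fun _ ↦ h_mono)
    (fun _ _ _ _ ↦ le_rfl)
  have h_finite : ∀ᶠ q in coprimeFilter S, ∀ n ∈ Set.Iic K, SMulReflects q V (U n) :=
    (eventually_all_finite (Set.finite_Iic K)).mpr fun n _ ↦ h.eventually_smulReflects hV (hU n) S
  filter_upwards [h_finite] with q hq n
  obtain hn | hn := le_total n K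
  · exact hq n hn
  · intro v hv hqv
    have h_eq : V ⊓ U n = V ⊓ U K := hK n hn 0
    have hqv' : q • v ∈ V ⊓ U K := h_eq ▸ ⟨V.smul_mem q hv, hqv⟩
    exact (h_eq.ge ⟨hv, hq K Set.self_mem_Iic v hv hqv'.2⟩).2

variable {t : G}

theorem smulReflects_translates_univ
    (h_past : ∀ n : ℕ, SMulReflects q V (translates t V (Set.Icc (-n) (-1))))
    (h_future : ∀ n : ℕ, SMulReflects q V (translates t V (Set.Icc 1 n))) :
    SMulReflects q (translates t V Set.univ) V := by
  have h_top (n k : ℕ) : SMulReflects q (translates t V (Set.Icc (-n) k))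
      (translates t V (Set.Icc (-n) 0)) := by
    induction k with
    | zero => exact fun m hm _ ↦ hm
    | succ k ih =>
      refine .trans ?_ ih (translates_mono (Set.Icc_subset_Icc le_rfl (by omega)))
      have := ((h_past (n + k + 1)).sup_right).smul (t ^ (k + 1 : ℤ))
      rw [sup_translates_neg, zpow_smul_translates_Icc, zpow_smul_translates_Icc] at this
      push_cast at this ⊢
      convert this using 3 <;> ring
  have h_bot (n : ℕ) : SMulReflects q (translates t V (Set.Icc (-n) 0)) V := by
    induction n with
    | zero =>
      rw [Nat.cast_zero, neg_zero, Set.Icc_self, translates_zero]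
      exact fun m hm _ ↦ hm
    | succ n ih =>
      refine .trans ?_ ih (le_translates (by simp))
      have := ((h_future (n + 1)).sup_right).smul (t ^ (-(n + 1) : ℤ))
      rw [sup_translates_pos, zpow_smul_translates_Icc, zpow_smul_translates_Icc] at this
      push_cast at this ⊢
      convert this using 3 <;> ring
  intro m hm
  obtain ⟨n, hn⟩ := mem_translates_univ.mp hm
  exact (h_top n n).trans (h_bot n) (le_translates (by simp)) m hn

theorem InvariantNoetherian.eventually_smulReflects_translates_univ [H.Normal]
    (h : InvariantNoetherian H V) (hV : H ≤ stabilizer G V) (S : Submonoid J) :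
    ∀ᶠ q in coprimeFilter S, SMulReflects q (translates t V Set.univ) V := by
  have h_past := h.eventually_forall_smulReflects hV
    (U := fun n ↦ translates t V (Set.Icc (-n) (-1))) (fun n ↦ le_stabilizer_translates hV _)
    (fun a b hab ↦ translates_mono (Set.Icc_subset_Icc (by omega) le_rfl)) S
  have h_future := h.eventually_forall_smulReflects hV
    (U := fun n ↦ translates t V (Set.Icc 1 n)) (fun n ↦ le_stabilizer_translates hV _)
    (fun a b hab ↦ translates_mono (Set.Icc_subset_Icc le_rfl (by omega))) S
  filter_upwards [h_past, h_future] with q using smulReflects_translates_univ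

end SMulReflects

section Group

open Subgroup
open scoped IsMulCommutative commutatorElement

variable {G : Type*} [Group G]

theorem mem_center_of_forall_commute {S : Set G} (hS : closure S = ⊤) {z : G}
    (h : ∀ s ∈ S, Commute s z) : z ∈ center G := by
  rw [← centralizer_univ, ← coe_top, ← hS, centralizer_closure]
  exact mem_centralizer_iff.mpr h

theorem commutator_normalClosure_top {X Y : Set G} (hY : closure Y = ⊤) :
    ⁅normalClosure X, ⊤⁆ = normalClosure (Set.image2 (⁅·, ·⁆) X Y) := by
  set K := normalClosure (Set.image2 (⁅·, ·⁆) X Y)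
  have h_surj : Function.Surjective (QuotientGroup.mk' K) := QuotientGroup.mk'_surjective K
  apply le_antisymm
  · have h_closure : closure (QuotientGroup.mk' K '' Y) = ⊤ := by
      rw [← MonoidHom.map_closure, hY, map_top_of_surjective _ h_surj]
    have h_central : normalClosure X ≤ (center (G ⧸ K)).comap (QuotientGroup.mk' K) := by
      refine normalClosure_le_normal fun x hx ↦ mem_center_of_forall_commute h_closure ?_
      rintro _ ⟨y, hy, rfl⟩
      rw [commute_iff_eq, eq_comm, ← commutatorElement_eq_one_iff_mul_comm,
        ← map_commutatorElement]
      exact (QuotientGroup.eq_one_iff _).mpr (subset_normalClosure (Set.mem_image2_of_mem hx hy))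
    rw [← QuotientGroup.ker_mk' K, ← MonoidHom.comap_bot, ← Subgroup.map_le_iff_le_comap,
      map_commutator, map_top_of_surjective _ h_surj, le_bot_iff,
      commutator_top_right_eq_bot_iff_le_center]
    exact Subgroup.map_le_iff_le_comap.mpr h_central
  · refine normalClosure_le_normal (Set.image2_subset_iff.mpr fun x hx y _ ↦ ?_)
    exact commutator_mem_commutator (subset_normalClosure hx) (mem_top y)

theorem exists_finite_lowerCentralSeries_eq_normalClosure [Group.FG G] (n : ℕ) :
    ∃ F : Set G, F.Finite ∧ (⊤ : Subgroup G).lowerCentralSeries n = normalClosure F := by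
  obtain ⟨S, hS, hS_finite⟩ := Group.fg_iff.mp ‹Group.FG G›
  induction n with
  | zero =>
    exact ⟨S, hS_finite, (top_le_iff.mp (hS ▸ closure_le_normalClosure)).symm⟩
  | succ n ih =>
    obtain ⟨F, hF_finite, hF⟩ := ih
    refine ⟨_, hF_finite.image2 (⁅·, ·⁆) hS_finite, ?_⟩
    rw [Subgroup.lowerCentralSeries_succ, hF, commutator_normalClosure_top hS]

theorem normal_of_lowerCentralSeries_le {H : Subgroup G} {n : ℕ}
    (h : (⊤ : Subgroup G).lowerCentralSeries (n + 1) ≤ H)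
    (h' : H ≤ (⊤ : Subgroup G).lowerCentralSeries n) : H.Normal :=
  commutator_top_right_le_iff.mp ((commutator_mono h' le_rfl).trans h)

theorem induction_of_fg_of_nilpotent [Group.FG G] [Group.IsNilpotent G] {P : Subgroup G → Prop}
    (bot : P ⊥) (sup_zpowers : ∀ (H : Subgroup G) (t : G), H.Normal → P H → P (H ⊔ zpowers t)) :
    P ⊤ := by
  let γ := (⊤ : Subgroup G).lowerCentralSeries
  have h_sup_closure (n : ℕ) (hP : P (γ (n + 1))) {F : Set G} (hF_finite : F.Finite)
      (hF : F ⊆ γ n) : P (γ (n + 1) ⊔ closure F) := by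
    induction F, hF_finite using Set.Finite.induction_on with
    | empty => simpa
    | insert _ _ ih =>
      rename_i t F _ _
      obtain ⟨-, hF⟩ := Set.insert_subset_iff.mp hF
      rw [Set.insert_eq, Subgroup.closure_union, ← zpowers_eq_closure, sup_comm (zpowers t),
        ← sup_assoc]
      refine sup_zpowers _ t (normal_of_lowerCentralSeries_le le_sup_left ?_) (ih hF)
      exact sup_le (Subgroup.lowerCentralSeries_antitone _ n.le_succ) ((closure_le _).mpr hF)
  have h_descend (n : ℕ) (hP : P (γ (n + 1))) : P (γ n) := by
    obtain ⟨F, hF_finite, hF⟩ := exists_finite_lowerCentralSeries_eq_normalClosure (G := G) n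
    have hFγ : F ⊆ γ n := by simpa only [γ, hF] using subset_normalClosure
    have h_le : γ (n + 1) ⊔ closure F ≤ γ n :=
      sup_le (Subgroup.lowerCentralSeries_antitone _ n.le_succ) ((closure_le _).mpr hFγ)
    have := normal_of_lowerCentralSeries_le le_sup_left h_le
    have h_ge : γ n ≤ γ (n + 1) ⊔ closure F :=
      hF.trans_le (normalClosure_le_normal (subset_closure.trans (SetLike.coe_mono le_sup_right)))
    exact h_le.antisymm h_ge ▸ h_sup_closure n hP hF_finite hFγ
  obtain ⟨c, hc⟩ := Subgroup.nilpotent_iff_lowerCentralSeries.mp ‹Group.IsNilpotent G›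
  exact Nat.decreasingInduction (motive := fun n _ ↦ P (γ n)) (fun n _ ↦ h_descend n)
    (Eq.subst (motive := P) hc.symm bot) c.zero_le

theorem mul_pow_of_commute_commutatorElement {y g : G} (h : Commute ⁅g, y⁆ y) (n : ℕ) :
    g * y ^ n * g⁻¹ = ⁅g, y⁆ ^ n * y ^ n := by
  rw [← h.mul_pow, ← conj_pow, commutatorElement_def, inv_mul_cancel_right]

theorem commute_pow_of_commutatorElement_pow_eq_one {y g : G} {n : ℕ} (h : Commute ⁅g, y⁆ y)
    (hn : ⁅g, y⁆ ^ n = 1) : Commute g (y ^ n) := by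
  rw [commute_iff_eq, ← mul_inv_eq_iff_eq_mul, mul_pow_of_commute_commutatorElement h, hn, one_mul]

theorem exists_pow_mem_center_of_isOfFinOrder [Group.FG G] {y : G}
    (h_comm : ∀ g : G, Commute ⁅g, y⁆ y) (h_fin : ∀ g : G, IsOfFinOrder ⁅g, y⁆) :
    ∃ n ≠ 0, y ^ n ∈ center G := by
  obtain ⟨S, hS⟩ := Group.fg_def.mp ‹Group.FG G›
  refine ⟨∏ s ∈ S, orderOf ⁅s, y⁆, Finset.prod_ne_zero_iff.mpr fun s _ ↦ (h_fin s).orderOf_pos.ne',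
    mem_center_of_forall_commute hS fun s hs ↦
      commute_pow_of_commutatorElement_pow_eq_one (h_comm s) ?_⟩
  exact orderOf_dvd_iff_pow_eq_one.mp (Finset.dvd_prod_of_mem _ hs)

theorem commutatorElement_mem_of_mk_mem_center {N : Subgroup G} [N.Normal] {y : G}
    (hy : (y : G ⧸ N) ∈ center (G ⧸ N)) (g : G) : ⁅g, y⁆ ∈ N := by
  rw [← QuotientGroup.eq_one_iff, ← QuotientGroup.mk'_apply, map_commutatorElement,
    commutatorElement_eq_one_iff_mul_comm]
  exact mem_center_iff.mp hy g

theorem finite_of_forall_mem_center_isOfFinOrder [Group.FG G] [Group.IsNilpotent G]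
    (h : ∀ z ∈ center G, IsOfFinOrder z) : Finite G := by
  revert ‹Group.FG G› h
  refine Group.nilpotent_center_quotient_ind
    (P := fun G _ _ ↦ [Group.FG G] → (∀ z ∈ center G, IsOfFinOrder z) → Finite G) G ?_ ?_
  · intros
    infer_instance
  · intro G _ _ ih _ h
    have h_quotient : Finite (G ⧸ center G) := by
      refine ih fun z hz ↦ ?_
      obtain ⟨y, rfl⟩ := QuotientGroup.mk_surjective z
      have hy := commutatorElement_mem_of_mk_mem_center hz
      obtain ⟨n, hn0, hn⟩ := exists_pow_mem_center_of_isOfFinOrder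
        (fun g ↦ (mem_center_iff.mp (hy g) y).symm) fun g ↦ h _ (hy g)
      refine isOfFinOrder_iff_pow_eq_one.mpr ⟨n, hn0.pos, ?_⟩
      rwa [← QuotientGroup.mk_pow, QuotientGroup.eq_one_iff]
    have : (center G).FiniteIndex := finiteIndex_of_finite_quotient
    have : Group.FG (center G) := fg_of_index_ne_zero _
    have : Finite (center G) := CommGroup.finite_of_fg_isMulTorsion _ fun z ↦
      Submonoid.isOfFinOrder_coe.mp (h z z.2)
    exact .of_subgroup_quotient (center G)

theorem isNilpotent_of_surjective_of_lowerCentralSeries_le_ker {H : Type*} [Group H] {f : G →* H}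
    (hf : Function.Surjective f) {n : ℕ} (h : (⊤ : Subgroup G).lowerCentralSeries n ≤ f.ker) :
    Group.IsNilpotent H := by
  refine Subgroup.nilpotent_iff_lowerCentralSeries.mpr ⟨n, ?_⟩
  rwa [← map_top_of_surjective f hf, ← Subgroup.map_lowerCentralSeries, Subgroup.map_eq_bot_iff]

end Group

section Jacobson

theorem isJacobsonRing_int : IsJacobsonRing ℤ := by
  refine isJacobsonRing_iff_prime_eq.mpr fun P hP ↦ ?_
  obtain rfl | hP_bot := eq_or_ne P ⊥
  · refine le_bot_iff.mp fun x hx ↦ ?_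
    have h_unit : IsUnit (x * x + 1) := Ideal.mem_jacobson_bot.mp hx x
    obtain h | h := Int.isUnit_iff.mp h_unit
    · exact mul_self_eq_zero.mp (by linarith)
    · nlinarith
  · have := hP.isMaximal hP_bot
    exact Ideal.jacobson_eq_self_of_isMaximal

theorem finite_of_finiteType_int (K : Type*) [Field K] [i : Algebra ℤ K] [Algebra.FiniteType ℤ K] :
    Finite K := by
  obtain rfl : i = Ring.toIntAlgebra K := Subsingleton.elim _ _
  have := isJacobsonRing_int
  have : Module.Finite ℤ K := finite_of_finite_type_of_isJacobsonRing ℤ K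
  obtain ⟨p, hp⟩ := CharP.exists K
  obtain rfl | hp_ne := eq_or_ne p 0
  · have : CharZero K := CharP.charP_to_charZero K
    have h_field : IsField ℤ := isField_of_isIntegral_of_isField
      (algebraMap ℤ K).injective_int (Field.toIsField K)
    exact absurd h_field Int.not_isField
  · have : NeZero p := ⟨hp_ne⟩
    let _ : Algebra (ZMod p) K := ZMod.algebra K p
    have : Module.Finite (ZMod p) K := .of_restrictScalars_finite ℤ (ZMod p) K
    exact Module.finite_of_finite (ZMod p)

variable {J : Type*} [CommRing J]

theorem exists_mem_notMem_isCoprime {m P : Ideal J} (hm : m.IsMaximal) (hPm : P < m)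
    {s : J} (hs : s ∉ m) : ∃ q ∈ m, q ∉ P ∧ IsCoprime q s := by
  obtain ⟨a, b, hb, hab⟩ := hm.exists_inv hs
  by_cases hbP : b ∈ P
  · obtain ⟨c, hc, hcP⟩ := SetLike.exists_of_lt hPm
    refine ⟨b + c * (a * s), add_mem hb (m.mul_mem_right _ hc), fun hq ↦ hcP ?_, ?_⟩
    · have h_mod : c = (b + c * (a * s)) + (c - 1) * b := by linear_combination -c * hab
      exact h_mod ▸ add_mem hq (P.mul_mem_left _ hbP)
    · exact ⟨1, (1 - c) * a, by linear_combination hab⟩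
  · exact ⟨b, hb, hbP, 1, a, by linear_combination hab⟩

theorem isMaximal_of_eventually_coprimeFilter [IsJacobsonRing J] {P : Ideal J} [hP : P.IsPrime]
    (h : ∀ᶠ q in coprimeFilter P.primeCompl, ∃ a, 1 - q * a ∈ P) : P.IsMaximal := by
  obtain ⟨s, hs, h⟩ := eventually_coprimeFilter_iff.mp h
  have hs_jacobson : s ∉ P.jacobson := (IsJacobsonRing.out ‹_› hP.isRadical).symm ▸ hs
  obtain ⟨m, hPm, hm, hsm⟩ : ∃ m : Ideal J, P ≤ m ∧ m.IsMaximal ∧ s ∉ m := by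
    simpa [Ideal.jacobson, Submodule.mem_sInf] using hs_jacobson
  obtain rfl | hlt := hPm.eq_or_lt
  · exact hm
  · obtain ⟨q, hqm, hqP, hqs⟩ := exists_mem_notMem_isCoprime hm hlt hsm
    obtain ⟨a, ha⟩ := h q hqP hqs
    refine absurd ?_ ((Ideal.ne_top_iff_one m).mp hm.ne_top)
    exact (sub_add_cancel 1 (q * a)) ▸ add_mem (hPm ha) (m.mul_mem_right a hqm)

theorem commute_aeval {A : Type*} [Ring A] [Algebra J A] {a b : A} (h : Commute a b) (p : J[X]) :
    Commute (Polynomial.aeval a p) b := by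
  induction p using Polynomial.induction_on' with
  | add p q hp hq => rw [map_add]; exact hp.add_left hq
  | monomial n c =>
    rw [Polynomial.aeval_monomial]
    exact (Algebra.commute_algebraMap_left c b).mul_left (h.pow_left n)

theorem finite_of_finite_quotient_annihilator {M : Type*} [AddCommGroup M] [Module J M]
    [Module.Finite J M] (h : Finite (J ⧸ Module.annihilator J M)) : Finite M := by
  let _ : Module (J ⧸ Module.annihilator J M) M := Module.quotientAnnihilator
  have : Module.Finite (J ⧸ Module.annihilator J M) M := .of_restrictScalars_finite J _ M
  exact Module.finite_of_finite (J ⧸ Module.annihilator J M)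

end Jacobson

section Monolith

variable {G J M : Type*} [Group G] [CommRing J] [AddCommGroup M] [Module J M]
  [DistribMulAction G M] [SMulCommClass G J M]

theorem exists_le_invariantNoetherian_eventually_smulReflects [Group.FG G] [Group.IsNilpotent G]
    [IsNoetherianRing J] {V : Submodule J M} (hV : V.FG) (S : Submonoid J) :
    ∃ W, V ≤ W ∧ ⊤ ≤ stabilizer G W ∧ InvariantNoetherian (⊤ : Subgroup G) W ∧
      ∀ᶠ q in coprimeFilter S, SMulReflects q W V := by
  refine induction_of_fg_of_nilpotent (P := fun H : Subgroup G ↦ ∃ W, V ≤ W ∧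
    H ≤ stabilizer G W ∧ InvariantNoetherian H W ∧
      ∀ᶠ q in coprimeFilter S, SMulReflects q W V) ?_ ?_
  · exact ⟨V, le_rfl, bot_le, invariantNoetherian_of_fg ⊥ hV, .of_forall fun q m hm _ ↦ hm⟩
  · rintro H t hH ⟨W, hVW, hHW, hW, hq⟩
    refine ⟨translates t W Set.univ, hVW.trans (le_translates (Set.mem_univ 0)),
      sup_zpowers_le_stabilizer_translates_univ hHW, hW.translates_univ hHW, ?_⟩
    filter_upwards [hq, hW.eventually_smulReflects_translates_univ hHW S] with q hq hq'
    exact hq'.trans hq hVW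

variable (G J) in
/-- `x` lies in every nonzero `G`-invariant `J`-submodule of `M`, that is, in the monolith of `M`
if `x ≠ 0`. -/
def MemMonolith (x : M) : Prop :=
  ∀ U : Submodule J M, ⊤ ≤ stabilizer G U → U ≠ ⊥ → x ∈ U

variable {x : M}

theorem MemMonolith.ker_eq_bot (hx : MemMonolith G J x) {φ : Module.End J M}
    (hφ : ∀ (g : G) m, φ (g • m) = g • φ m) (hφx : φ x ≠ 0) : LinearMap.ker φ = ⊥ := by
  by_contra h
  exact hφx (hx _ (le_stabilizer_comap φ hφ le_stabilizer_bot) h)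

theorem MemMonolith.isNilpotent (hx : MemMonolith G J x) (hx0 : x ≠ 0)
    (h : InvariantNoetherian (⊤ : Subgroup G) (⊤ : Submodule J M)) {φ : Module.End J M}
    (hφ : ∀ (g : G) m, φ (g • m) = g • φ m) (hφx : φ x = 0) : IsNilpotent φ := by
  have hφ_pow (n : ℕ) (g : G) (m : M) : (φ ^ n) (g • m) = g • (φ ^ n) m := by
    simpa only [Module.End.coe_pow] using Function.Commute.iterate_left (g := (g • ·)) (hφ g) n m
  have : WellFoundedGT {U : Submodule J M // ⊤ ≤ stabilizer G U ∧ U ≤ ⊤} := h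
  obtain ⟨n, hn⟩ := WellFoundedGT.monotone_chain_condition
    (⟨fun n ↦ ⟨LinearMap.ker (φ ^ n), le_stabilizer_comap _ (hφ_pow n) le_stabilizer_bot, le_top⟩,
      fun a b hab ↦ φ.iterateKer.monotone hab⟩ :
      ℕ →o {U : Submodule J M // ⊤ ≤ stabilizer G U ∧ U ≤ ⊤})
  refine ⟨n, by_contra fun h_ne ↦ hx0 ?_⟩
  have h_range : ⊤ ≤ stabilizer G (LinearMap.range (φ ^ n)) :=
    LinearMap.range_eq_map (φ ^ n) ▸ le_stabilizer_map _ (hφ_pow n) le_stabilizer_top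
  obtain ⟨y, hy⟩ := hx _ h_range (mt LinearMap.range_eq_bot.mp h_ne)
  have hy' : y ∈ LinearMap.ker (φ ^ (n + 1)) := by
    rw [LinearMap.mem_ker, pow_succ', Module.End.mul_apply, hy, hφx]
  have h_ker : LinearMap.ker (φ ^ n) = LinearMap.ker (φ ^ (n + 1)) :=
    congrArg Subtype.val (hn (n + 1) n.le_succ)
  rw [← hy]
  exact h_ker.ge hy'

theorem MemMonolith.isPrime_torsionOf (hx : MemMonolith G J x) (hx0 : x ≠ 0) :
    (Ideal.torsionOf J M x).IsPrime := by
  refine ⟨(Ideal.ne_top_iff_one _).mpr ?_, fun {r s} hrs ↦ or_iff_not_imp_left.mpr fun hr ↦ ?_⟩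
  · simpa using hx0
  · have h_ker := hx.ker_eq_bot (φ := LinearMap.lsmul J M r) (fun g m ↦ (smul_comm g r m).symm) hr
    refine LinearMap.ker_eq_bot'.mp h_ker (s • x) ?_
    rwa [LinearMap.lsmul_apply, smul_smul]

theorem MemMonolith.eventually_coprimeFilter [Group.FG G] [Group.IsNilpotent G]
    [IsNoetherianRing J] (hx : MemMonolith G J x) [(Ideal.torsionOf J M x).IsPrime] :
    ∀ᶠ q in coprimeFilter (Ideal.torsionOf J M x).primeCompl,
      ∃ a, 1 - q * a ∈ Ideal.torsionOf J M x := by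
  obtain ⟨W, hxW, hGW, -, h⟩ := exists_le_invariantNoetherian_eventually_smulReflects (G := G)
    (Submodule.fg_span_singleton (R := J) x) (Ideal.torsionOf J M x).primeCompl
  rw [Submodule.span_singleton_le_iff_mem] at hxW
  obtain ⟨s, hs, h⟩ := eventually_coprimeFilter_iff.mp h
  refine eventually_coprimeFilter_iff.mpr ⟨s, hs, fun q hq hqs ↦ ?_⟩
  obtain ⟨w, hw, hwx⟩ : x ∈ W.map (LinearMap.lsmul J M q) := by
    refine hx _ (le_stabilizer_map _ (fun g m ↦ (smul_comm g q m).symm) hGW) fun h_bot ↦ hq ?_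
    exact (Submodule.mem_bot J).mp (h_bot ▸ Submodule.mem_map_of_mem hxW)
  rw [LinearMap.lsmul_apply] at hwx
  have hw_span : w ∈ J ∙ x :=
    h q hq hqs w hw (by rw [hwx]; exact Submodule.mem_span_singleton_self x)
  obtain ⟨a, rfl⟩ := Submodule.mem_span_singleton.mp hw_span
  refine ⟨a, (Ideal.mem_torsionOf_iff x _).mpr ?_⟩
  rw [sub_smul, one_smul, mul_smul, hwx, sub_self]

theorem MemMonolith.finite_quotient_torsionOf [Group.FG G] [Group.IsNilpotent G]
    [Algebra ℤ J] [Algebra.FiniteType ℤ J] (hx : MemMonolith G J x) (hx0 : x ≠ 0) :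
    Finite (J ⧸ Ideal.torsionOf J M x) := by
  have := isJacobsonRing_int
  have : IsJacobsonRing J := isJacobsonRing_of_finiteType (A := ℤ)
  have : IsNoetherianRing J := Algebra.FiniteType.isNoetherianRing ℤ J
  have := hx.isPrime_torsionOf hx0
  have := isMaximal_of_eventually_coprimeFilter hx.eventually_coprimeFilter
  let _ : Field (J ⧸ Ideal.torsionOf J M x) := Ideal.Quotient.field _
  have : Algebra.FiniteType ℤ (J ⧸ Ideal.torsionOf J M x) :=
    .of_surjective (Ideal.Quotient.mkₐ ℤ _) Ideal.Quotient.mk_surjective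
  exact finite_of_finiteType_int _

theorem MemMonolith.torsionOf_le_radical (hx : MemMonolith G J x) (hx0 : x ≠ 0)
    (h : InvariantNoetherian (⊤ : Subgroup G) (⊤ : Submodule J M)) :
    Ideal.torsionOf J M x ≤ (Module.annihilator J M).radical := by
  intro r hr
  obtain ⟨n, hn⟩ := hx.isNilpotent hx0 h (φ := algebraMap J (Module.End J M) r)
    (fun g m ↦ (smul_comm g r m).symm) hr
  refine ⟨n, Module.mem_annihilator.mpr fun m ↦ ?_⟩
  rw [← Module.algebraMap_end_apply J J, map_pow, hn, LinearMap.zero_apply]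

theorem MemMonolith.finite_quotient_annihilator [Group.FG G] [Group.IsNilpotent G]
    [Algebra ℤ J] [Algebra.FiniteType ℤ J] (hx : MemMonolith G J x) (hx0 : x ≠ 0)
    (h : InvariantNoetherian (⊤ : Subgroup G) (⊤ : Submodule J M)) :
    Finite (J ⧸ Module.annihilator J M) := by
  have : IsNoetherianRing J := Algebra.FiniteType.isNoetherianRing ℤ J
  have := hx.finite_quotient_torsionOf hx0
  obtain ⟨n, hn⟩ := Ideal.exists_pow_le_of_le_radical_of_fg (hx.torsionOf_le_radical hx0 h)
    (IsNoetherian.noetherian _)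
  have := Ideal.finite_quotient_pow (IsNoetherian.noetherian (Ideal.torsionOf J M x)) n
  exact .of_surjective _ (Ideal.Quotient.factor_surjective hn)

section IsScalarTower

variable {R : Type*} [CommRing R] [Module R M] [SMulCommClass G R M] [SMul R J]
  [IsScalarTower R J M]

theorem le_stabilizer_restrictScalars {H : Subgroup G} {V : Submodule J M}
    (hV : H ≤ stabilizer G V) : H ≤ stabilizer G (V.restrictScalars R) := by
  rw [le_stabilizer_iff] at *
  exact hV

theorem MemMonolith.of_isScalarTower (hx : MemMonolith G R x) : MemMonolith G J x :=
  fun U hU h_ne ↦ hx (U.restrictScalars R) (le_stabilizer_restrictScalars hU)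
    ((Submodule.restrictScalars_eq_bot_iff R J M).not.mpr h_ne)

theorem InvariantNoetherian.of_isScalarTower {H : Subgroup G}
    (h : InvariantNoetherian H (⊤ : Submodule R M)) :
    InvariantNoetherian H (⊤ : Submodule J M) := by
  have : WellFoundedGT {U : Submodule R M // H ≤ stabilizer G U ∧ U ≤ ⊤} := h
  exact StrictMono.wellFoundedGT
    (f := fun U : {U : Submodule J M // H ≤ stabilizer G U ∧ U ≤ ⊤} ↦
      (⟨U.1.restrictScalars R, le_stabilizer_restrictScalars U.2.1, le_top⟩ :
        {U : Submodule R M // H ≤ stabilizer G U ∧ U ≤ ⊤})) fun _ _ h ↦ h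

end IsScalarTower

end Monolith

section Faithful

variable {G M : Type*} [Group G] [Group.FG G] [Group.IsNilpotent G] [AddCommGroup M]
  [DistribMulAction G M] {x : M}

theorem MemMonolith.not_injective_pow (hx : MemMonolith G ℤ x) (hx0 : x ≠ 0)
    (h : InvariantNoetherian (⊤ : Subgroup G) (⊤ : Submodule ℤ M)) {φ : Module.End ℤ M}
    (hφ : ∀ (g : G) m, φ (g • m) = g • φ m) : ¬ Function.Injective (fun n : ℕ ↦ φ ^ n) := by
  let _ : Module ℤ[X] M := .compHom M (Polynomial.aeval φ).toRingHom
  have h_smul (p : ℤ[X]) (m : M) : p • m = Polynomial.aeval φ p m := rfl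
  have : SMulCommClass G ℤ[X] M := by
    refine ⟨fun g p m ↦ ?_⟩
    have h_comm : Commute φ (DistribSMul.toLinearMap ℤ M g) := LinearMap.ext (hφ g)
    exact (LinearMap.congr_fun (commute_aeval h_comm p) m).symm
  have := hx.of_isScalarTower (J := ℤ[X]) |>.finite_quotient_annihilator hx0 h.of_isScalarTower
  obtain ⟨i, j, hij, h_eq⟩ := Finite.exists_ne_map_eq_of_infinite
    fun n : ℕ ↦ Ideal.Quotient.mk (Module.annihilator ℤ[X] M) (Polynomial.X ^ n)
  refine fun h_inj ↦ hij (h_inj (LinearMap.ext fun m ↦ ?_))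
  have := Module.mem_annihilator.mp (Ideal.Quotient.eq.mp h_eq) m
  simpa [h_smul, sub_eq_zero] using this

theorem MemMonolith.isOfFinOrder_of_mem_center [FaithfulSMul G M] (hx : MemMonolith G ℤ x)
    (hx0 : x ≠ 0) (h : InvariantNoetherian (⊤ : Subgroup G) (⊤ : Submodule ℤ M)) {z : G}
    (hz : z ∈ Subgroup.center G) : IsOfFinOrder z := by
  let σ := DistribMulAction.toModuleEnd ℤ M (S := G)
  have hσz (g : G) (m : M) : σ z (g • m) = g • σ z m := by
    change z • g • m = g • z • m
    rw [smul_smul, smul_smul, Subgroup.mem_center_iff.mp hz g]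
  have hσ : Function.Injective σ := fun g g' hgg' ↦
    FaithfulSMul.eq_of_smul_eq_smul (LinearMap.congr_fun hgg')
  by_contra hz_inf
  refine hx.not_injective_pow hx0 h hσz fun i j hij ↦ ?_
  simp only [← map_pow] at hij
  exact injective_pow_iff_not_isOfFinOrder.mpr hz_inf (hσ hij)

end Faithful

section GroupMonolith

open Subgroup
open scoped IsMulCommutative commutatorElement

theorem MemMonolith.finite {G M : Type*} [Group G] [Group.FG G] [Group.IsNilpotent G]
    [AddCommGroup M] [DistribMulAction G M] [FaithfulSMul G M] {x : M}
    (hx : MemMonolith G ℤ x) (hx0 : x ≠ 0) {V : Submodule ℤ M} (hV : V.FG)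
    (hV_top : ∀ U, ⊤ ≤ stabilizer G U → V ≤ U → U = ⊤) : Finite M := by
  obtain ⟨W, hVW, hGW, hW, -⟩ :=
    exists_le_invariantNoetherian_eventually_smulReflects (G := G) hV ⊥
  rw [hV_top W hGW hVW] at hW
  have : Finite G := finite_of_forall_mem_center_isOfFinOrder fun z hz ↦
    hx.isOfFinOrder_of_mem_center hx0 hW hz
  have h_iSup : ⨆ g : G, g • V = ⊤ := by
    refine hV_top _ (fun h _ ↦ ?_) ((one_smul G V).ge.trans (le_iSup (· • V) (1 : G)))
    simp_rw [MulAction.mem_stabilizer_iff, Submodule.smul_iSup', smul_smul]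
    exact (Equiv.mulLeft h).iSup_comp (g := fun g ↦ g • V)
  have : Module.Finite ℤ M := ⟨h_iSup ▸ Submodule.fg_iSup _ fun g ↦ hV.map _⟩
  exact finite_of_finite_quotient_annihilator (hx.finite_quotient_annihilator hx0 hW)

/-- The action on `Additive A` induced by an action on `A` by automorphisms. -/
abbrev additiveDistribMulAction (Q A : Type*) [Monoid Q] [Monoid A] [MulDistribMulAction Q A] :
    DistribMulAction Q (Additive A) where
  smul q a := .ofMul (q • a.toMul)
  one_smul a := congrArg Additive.ofMul (one_smul Q a.toMul)
  mul_smul q r a := congrArg Additive.ofMul (mul_smul q r a.toMul)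
  smul_zero q := congrArg Additive.ofMul (smul_one q)
  smul_add q a b := congrArg Additive.ofMul (smul_mul' q a.toMul b.toMul)

attribute [local instance] additiveDistribMulAction

variable {G : Type*} [Group G] {B : Subgroup G} [B.Normal]

theorem exists_normal_forall_coe_mem_iff [IsMulCommutative B] {U : Submodule ℤ (Additive B)}
    (hU : ⊤ ≤ stabilizer (MulAut.conjNormal : G →* MulAut B).range U) :
    ∃ N : Subgroup G, N.Normal ∧ ∀ b : B, (b : G) ∈ N ↔ Additive.ofMul b ∈ U := by
  have h_mem (b : B) :
      (b : G) ∈ (AddSubgroup.toSubgroup' U.toAddSubgroup).map B.subtype ↔ Additive.ofMul b ∈ U :=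
    mem_map_iff_mem B.subtype_injective
  refine ⟨_, ⟨?_⟩, h_mem⟩
  rintro _ ⟨b, hb, rfl⟩ g
  have := le_stabilizer_iff.mp hU ⟨MulAut.conjNormal g, g, rfl⟩ (mem_top _) _ hb
  exact MulAut.conjNormal_apply g b ▸ (h_mem _).mpr this

/-- `x` lies in every nontrivial normal subgroup of `G`, that is, in the monolith of `G` if
`x ≠ 1`. -/
def MemGroupMonolith {G : Type*} [Group G] (x : G) : Prop :=
  ∀ N : Subgroup G, N.Normal → N ≠ ⊥ → x ∈ N

variable {x : G}

theorem MemGroupMonolith.finite_of_normalClosure_eq (hx : MemGroupMonolith x) (hx1 : x ≠ 1)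
    [Group.FG G] [IsMulCommutative B]
    [Group.IsNilpotent (MulAut.conjNormal : G →* MulAut B).range] {F : Set G} (hF : F.Finite)
    (hFB : normalClosure F = B) (hxB : x ∈ B) : Finite B := by
  let Q := (MulAut.conjNormal : G →* MulAut B).range
  have : Group.FG Q := Group.fg_range _
  have : FaithfulSMul Q (Additive B) :=
    ⟨fun h ↦ Subtype.ext (MulEquiv.ext h)⟩
  have h_mono : MemMonolith Q ℤ (Additive.ofMul (⟨x, hxB⟩ : B)) := by
    intro U hU h_ne
    obtain ⟨N, hN, hNU⟩ := exists_normal_forall_coe_mem_iff hU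
    refine (hNU _).mp (hx N hN ?_)
    rintro rfl
    refine h_ne ((Submodule.eq_bot_iff U).mpr fun b hb ↦ ?_)
    exact Subtype.ext (mem_bot.mp ((hNU b.toMul).mpr hb))
  have hV : (Submodule.span ℤ {b : Additive B | (b.toMul : G) ∈ F}).FG :=
    Submodule.fg_span (hF.preimage Subtype.val_injective.injOn)
  suffices h : Finite (Additive B) from h
  refine h_mono.finite (fun h ↦ hx1 (congrArg Subtype.val h)) hV fun U hU hVU ↦ ?_
  obtain ⟨N, hN, hNU⟩ := exists_normal_forall_coe_mem_iff hU
  have hBN : B ≤ N := by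
    have hF' : F ⊆ B := hFB ▸ subset_normalClosure
    refine hFB ▸ normalClosure_le_normal fun f hf ↦ ?_
    exact (hNU ⟨f, hF' hf⟩).mpr (hVU (Submodule.subset_span hf))
  exact Submodule.eq_top_iff'.mpr fun b ↦ (hNU b.toMul).mp (hBN b.toMul.2)

theorem MemGroupMonolith.mem_zpowers (hx : MemGroupMonolith x) {z : G} (hz : z ∈ center G)
    (hz1 : z ≠ 1) : x ∈ zpowers z := by
  refine hx _ (commutator_top_right_le_iff.mp ?_) (zpowers_ne_bot.mpr hz1)
  rw [commutator_top_right_eq_bot_iff_le_center.mpr (zpowers_le.mpr hz)]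
  exact bot_le

theorem MemGroupMonolith.isOfFinOrder_of_mem_center (hx : MemGroupMonolith x) (hx1 : x ≠ 1) {z : G}
    (hz : z ∈ center G) : IsOfFinOrder z := by
  by_contra hz_inf
  obtain ⟨i, rfl⟩ := hx.mem_zpowers hz (by rintro rfl; exact hz_inf .one)
  have h_inf : ¬ IsOfFinOrder (z ^ i) := by
    intro h
    obtain ⟨n, hn0, hn⟩ := isOfFinOrder_iff_zpow_eq_one.mp h
    refine hz_inf (isOfFinOrder_iff_zpow_eq_one.mpr
      ⟨i * n, mul_ne_zero ?_ hn0, zpow_mul z i n ▸ hn⟩)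
    rintro rfl
    exact hx1 (zpow_zero z)
  have h_sq : (z ^ i) ^ 2 ≠ 1 := fun h ↦ h_inf (isOfFinOrder_iff_pow_eq_one.mpr ⟨2, two_pos, h⟩)
  have h_mem := hx.mem_zpowers (pow_mem (zpow_mem hz i) 2) h_sq
  rw [mem_zpowers_pow_iff, orderOf_eq_zero h_inf] at h_mem
  norm_num at h_mem

theorem MemGroupMonolith.finite_of_isNilpotent_quotient (hx : MemGroupMonolith x) (hx1 : x ≠ 1)
    [Group.FG G] (B : Subgroup G) [B.Normal] [Finite B] [Group.IsNilpotent (G ⧸ B)] : Finite G := by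
  have : Finite (G ⧸ B) := by
    refine finite_of_forall_mem_center_isOfFinOrder fun z hz ↦ ?_
    obtain ⟨y, rfl⟩ := QuotientGroup.mk_surjective z
    obtain ⟨n, hn0, hn⟩ := isOfFinOrder_iff_pow_eq_one.mp
      (isOfFinOrder_of_finite (MulAut.conjNormal y : MulAut B))
    have h_mem : ∀ g, ⁅g, y ^ n⁆ ∈ B := commutatorElement_mem_of_mk_mem_center (pow_mem hz n)
    have h_comm (b : B) : Commute (b : G) (y ^ n) := by
      have := congrArg Subtype.val (DFunLike.congr_fun hn b)
      rw [← map_pow, MulAut.conjNormal_apply] at this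
      exact (mul_inv_eq_iff_eq_mul.mp this).symm
    obtain ⟨m, hm0, hm⟩ := exists_pow_mem_center_of_isOfFinOrder
      (fun g ↦ h_comm ⟨_, h_mem g⟩) fun g ↦ Submonoid.isOfFinOrder_coe.mpr
        (isOfFinOrder_of_finite (⟨_, h_mem g⟩ : B))
    have := hx.isOfFinOrder_of_mem_center hx1 hm
    exact (QuotientGroup.mk' B).isOfFinOrder ((this.of_pow hm0).of_pow hn0.ne')
  exact .of_subgroup_quotient B

theorem MemGroupMonolith.finite (hx : MemGroupMonolith x) (hx1 : x ≠ 1) [Group.FG G] {n : ℕ}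
    [IsMulCommutative ((⊤ : Subgroup G).lowerCentralSeries n)] : Finite G := by
  set B := (⊤ : Subgroup G).lowerCentralSeries n
  have : Group.IsNilpotent (G ⧸ B) := isNilpotent_of_surjective_of_lowerCentralSeries_le_ker
    (QuotientGroup.mk'_surjective B) (QuotientGroup.ker_mk' B).ge
  suffices Finite B from hx.finite_of_isNilpotent_quotient hx1 B
  obtain h_bot | h_ne := eq_or_ne B ⊥
  · rw [h_bot]
    infer_instance
  · obtain ⟨F, hF, hFB⟩ := exists_finite_lowerCentralSeries_eq_normalClosure (G := G) n
    have : Group.IsNilpotent (MulAut.conjNormal : G →* MulAut B).range := by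
      refine isNilpotent_of_surjective_of_lowerCentralSeries_le_ker (n := n)
        MulAut.conjNormal.rangeRestrict_surjective fun b hb ↦ ?_
      rw [MonoidHom.ker_rangeRestrict, MonoidHom.mem_ker]
      ext b'
      rw [MulAut.conjNormal_apply, setLike_mul_comm hb b'.2, mul_inv_cancel_right, MulAut.one_apply]
    exact hx.finite_of_normalClosure_eq hx1 hF hFB.symm (hx B inferInstance h_ne)

end GroupMonolith

section ResiduallyFinite

variable {G : Type*} [Group G]

theorem exists_maximal_normal_notMem {x : G} (hx1 : x ≠ 1) :
    ∃ N : Subgroup G, Maximal (fun N ↦ N.Normal ∧ x ∉ N) N := by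
  refine (zorn_le_nonempty₀ {N : Subgroup G | N.Normal ∧ x ∉ N} (fun c hc h_chain N hN ↦ ?_) ⊥
    ⟨inferInstance, by simpa using hx1⟩).imp fun N ↦ And.right
  refine ⟨sSup c, ⟨Subgroup.sSup_normal c fun K hK ↦ (hc hK).1, fun hx ↦ ?_⟩, fun K ↦ le_sSup⟩
  obtain ⟨K, hK, hxK⟩ := (Subgroup.mem_sSup_of_directedOn ⟨N, hN⟩ h_chain.directedOn).mp hx
  exact (hc hK).2 hxK

theorem memGroupMonolith_mk_of_maximal {N : Subgroup G} [N.Normal] {x : G}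
    (hN : Maximal (fun N ↦ N.Normal ∧ x ∉ N) N) : MemGroupMonolith (x : G ⧸ N) := by
  intro K hK h_ne
  by_contra hxK
  have h_le : N ≤ K.comap (QuotientGroup.mk' N) := QuotientGroup.le_comap_mk' N K
  have h_eq := hN.eq_of_le ⟨inferInstance, hxK⟩ h_le
  refine h_ne ?_
  rw [← Subgroup.map_comap_eq_self_of_surjective (QuotientGroup.mk'_surjective N) K, ← h_eq,
    QuotientGroup.map_mk'_self]

theorem residuallyFinite_of_isMulCommutative_lowerCentralSeries [Group.FG G] {n : ℕ}
    [IsMulCommutative ((⊤ : Subgroup G).lowerCentralSeries n)] : Group.ResiduallyFinite G := by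
  refine Group.residuallyFinite_iff_exists_finiteIndexNormalSubgroup.mpr fun x hx1 ↦ ?_
  obtain ⟨N, hN⟩ := exists_maximal_normal_notMem hx1
  have := hN.prop.1
  have : IsMulCommutative ((⊤ : Subgroup (G ⧸ N)).lowerCentralSeries n) := by
    rw [← Subgroup.map_top_of_surjective _ (QuotientGroup.mk'_surjective N),
      ← Subgroup.map_lowerCentralSeries]
    infer_instance
  have : Finite (G ⧸ N) := (memGroupMonolith_mk_of_maximal hN).finite (n := n)
    ((QuotientGroup.eq_one_iff x).not.mpr hN.prop.2)
  have : N.FiniteIndex := Subgroup.finiteIndex_of_finite_quotient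
  exact ⟨.ofSubgroup N, hN.prop.2⟩

end ResiduallyFinite

/-- **P. Hall's theorem**: every finitely generated abelian-by-nilpotent group is
residually finite. -/
theorem stmt7 (G : Type) [Group G] [Group.FG G] (A : Subgroup G) [A.Normal]
    (hA : ∀ a ∈ A, ∀ b ∈ A, a * b = b * a)
    [Group.IsNilpotent (G ⧸ A)] :
    (⨅ (H : Subgroup G) (_ : H.Normal) (_ : H.FiniteIndex), H) = ⊥ := by
  obtain ⟨n, hn⟩ := Subgroup.nilpotent_iff_lowerCentralSeries.mp ‹Group.IsNilpotent (G ⧸ A)›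
  have h_le : (⊤ : Subgroup G).lowerCentralSeries n ≤ A := by
    rwa [← Subgroup.map_top_of_surjective _ (QuotientGroup.mk'_surjective A),
      ← Subgroup.map_lowerCentralSeries, Subgroup.map_eq_bot_iff, QuotientGroup.ker_mk'] at hn
  have : IsMulCommutative ((⊤ : Subgroup G).lowerCentralSeries n) :=
    .of_comm fun a b ↦ Subtype.ext (hA a (h_le a.2) b (h_le b.2))
  have := residuallyFinite_of_isMulCommutative_lowerCentralSeries (G := G) (n := n)
  rw [← le_bot_iff, ← Group.ResiduallyFinite.iInf_eq_bot (G := G)]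
  exact le_iInf fun H ↦ iInf_le_of_le _ (iInf₂_le H.isNormal' H.isFiniteIndex')
end

section
/- Let $G$ be a finitely generated nilpotent group and let $M$ be a finitely generated module over the integral group ring $\mathbb{Z}[G]$. Then $M$ is residually finite as a $\mathbb{Z}[G]$-module: the intersection of all $\mathbb{Z}[G]$-submodules $M' \subseteq M$ with $M/M'$ finite is $0$. -/
/-!
Given `a ≠ 0`, choose a submodule `N` maximal among those avoiding `a`, possible because `ℤ[G]` is
noetherian. Then `M ⧸ N` is monolithic, with simple monolith generated by the image of `a`, and it
suffices to show that a finitely generated monolithic module `M` is finite.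

Let `J` be a noetherian domain. The submodule argument of Hilbert's basis theorem, applied to `J[G]`
as an iterated skew Laurent extension, shows that every finitely generated `J[G]`-module is
torsion-free and Hausdorff for the `π`-adic topology, after localizing at `(π)`, for all primes `π`
outside the divisors of some `α ≠ 0`. Hence, if `J` is a principal ideal domain with infinitely many
primes, no such nonzero module has all nonzero elements of `J` acting bijectively. For a simple
`ℤ[G]`-module the endomorphisms form a division ring; taking `J = ℤ` shows that it has prime
characteristic `p`, and taking `J = 𝔽_p[X]` shows that it is algebraic over `𝔽_p`. So each nonzero
endomorphism of a simple module has finite order.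

An endomorphism of the monolithic module `M` that kills the monolith is nilpotent by Fitting's
lemma. Therefore `M` has positive characteristic and every automorphism of `M` is a root of some
`(X ^ m - 1) ^ l` over a finite ring, so it has finite order. In particular the center of the
image of `G` in `Aut M` is torsion. A finitely generated nilpotent group with torsion center is
finite, so `M` is a finitely generated abelian group of bounded exponent, hence finite.
-/

open scoped Pointwise

instance instWellFoundedGTNatOrderHom {α : Type*} [PartialOrder α] [WellFoundedGT α] :
    WellFoundedGT (ℕ →o α) := by
  refine wellFoundedGT_iff_monotone_chain_condition.mpr fun L => ?_
  obtain ⟨d, hd⟩ := WellFoundedGT.monotone_chain_condition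
    (⟨fun k => L k k, fun i j h => (L.monotone h i).trans ((L j).monotone h)⟩ : ℕ →o α)
  choose c hc using fun n => WellFoundedGT.monotone_chain_condition
    (⟨fun k => L k n, fun _ _ h => L.monotone h n⟩ : ℕ →o α)
  have diagonal_const : ∀ k n, d ≤ k → d ≤ n → L k n = L d d := fun k n hk hn => by
    refine le_antisymm ?_ ((L.monotone hk d).trans ((L k).monotone hn))
    calc L k n ≤ L (max k n) (max k n) :=
          (L.monotone (le_max_left k n) n).trans ((L _).monotone (le_max_right k n))
      _ = L d d := (hd _ (hk.trans (le_max_left k n))).symm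
  refine ⟨d + ∑ n ∈ Finset.range d, c n, fun m hm => OrderHom.ext _ _ (funext fun n => ?_)⟩
  obtain hn | hn := lt_or_ge n d
  · have hcn : c n ≤ d + ∑ n ∈ Finset.range d, c n :=
      (Finset.single_le_sum_of_canonicallyOrdered (Finset.mem_range.mpr hn)).trans
        (Nat.le_add_left _ _)
    exact (hc n _ hcn).symm.trans (hc n _ (hcn.trans hm))
  · rw [diagonal_const _ n (Nat.le_add_right _ _) hn,
      diagonal_const _ n ((Nat.le_add_right _ _).trans hm) hn]

section Separation

variable {J W U : Type*} [CommRing J] [AddCommGroup W] [Module J W] [AddCommGroup U] [Module J U]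

/-- The `S`-saturation of a submodule `A` of `W`: the kernel of `W → S⁻¹(W/A)`. -/
def saturation (S : Submonoid J) (A : Submodule J W) : Submodule J W where
  carrier := {w | ∃ s ∈ S, s • w ∈ A}
  zero_mem' := ⟨1, S.one_mem, by simp only [smul_zero, zero_mem]⟩
  add_mem' := by
    rintro v w ⟨s, hs, hv⟩ ⟨t, ht, hw⟩
    refine ⟨s * t, S.mul_mem hs ht, ?_⟩
    rw [smul_add, mul_comm, mul_smul, mul_comm, mul_smul]
    exact A.add_mem (A.smul_mem t hv) (A.smul_mem s hw)
  smul_mem' := by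
    rintro r w ⟨s, hs, hw⟩
    exact ⟨s, hs, smul_comm r s w ▸ A.smul_mem r hw⟩

/-- `IsSeparatedMod S π A B` says, for `A ≤ B`, that the module `S⁻¹(B/A)` is `π`-torsion-free and
`π`-adically Hausdorff, without forming quotients or localizations. -/
structure IsSeparatedMod (S : Submonoid J) (π : J) (A B : Submodule J W) : Prop where
  mem_saturation_of_smul_mem : ∀ b ∈ B, π • b ∈ saturation S A → b ∈ saturation S A
  mem_saturation_of_forall_pow :
    ∀ b ∈ B, (∀ n : ℕ, b ∈ saturation S (A ⊔ π ^ n • B)) → b ∈ saturation S A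

variable {S : Submonoid J} {π : J}

theorem mem_saturation {A : Submodule J W} {w : W} :
    w ∈ saturation S A ↔ ∃ s ∈ S, s • w ∈ A :=
  Iff.rfl

theorem le_saturation (A : Submodule J W) : A ≤ saturation S A := fun w hw =>
  ⟨1, S.one_mem, (one_smul J w).symm ▸ hw⟩

theorem saturation_mono : Monotone (saturation S : Submodule J W → Submodule J W) :=
  fun _ _ h _ ⟨s, hs, hw⟩ => ⟨s, hs, h hw⟩

theorem smul_mem_saturation_iff {A : Submodule J W} {s : J} (hs : s ∈ S) {w : W} :
    s • w ∈ saturation S A ↔ w ∈ saturation S A :=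
  ⟨fun ⟨t, ht, h⟩ => ⟨t * s, S.mul_mem ht hs, mul_smul t s w ▸ h⟩,
    (saturation S A).smul_mem s⟩

theorem comap_saturation (g : U →ₗ[J] W) (A : Submodule J W) :
    (saturation S A).comap g = saturation S (A.comap g) := by
  ext u
  simp only [Submodule.mem_comap, mem_saturation, map_smul]

namespace IsSeparatedMod

variable {A B C : Submodule J W}

theorem refl (A : Submodule J W) : IsSeparatedMod S π A A where
  mem_saturation_of_smul_mem _ hb _ := le_saturation A hb
  mem_saturation_of_forall_pow _ hb _ := le_saturation A hb

theorem mem_saturation_of_pow_smul_mem (h : IsSeparatedMod S π A B) (n : ℕ) {b : W} (hb : b ∈ B)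
    (hn : π ^ n • b ∈ saturation S A) : b ∈ saturation S A := by
  induction n with
  | zero => rwa [pow_zero, one_smul] at hn
  | succ n ih =>
    rw [pow_succ', mul_smul] at hn
    exact ih (h.mem_saturation_of_smul_mem _ (B.smul_mem _ hb) hn)

theorem mem_saturation_sup_pow (h : IsSeparatedMod S π B C) (hAB : A ≤ B) {n : ℕ} {w : W}
    (hB : w ∈ saturation S B) (hC : w ∈ saturation S (A ⊔ π ^ n • C)) :
    w ∈ saturation S (A ⊔ π ^ n • B) := by
  obtain ⟨s, hs, hsw⟩ := hC
  obtain ⟨a, ha, _, hπu, hau⟩ := Submodule.mem_sup.mp hsw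
  obtain ⟨u, hu, rfl⟩ := (Submodule.mem_smul_pointwise_iff_exists _ _ _).mp hπu
  have hu' : π ^ n • u ∈ saturation S B := by
    rw [← add_sub_cancel_left a (π ^ n • u), hau]
    exact sub_mem ((saturation S B).smul_mem s hB) (le_saturation B (hAB ha))
  obtain ⟨t, ht, htu⟩ := h.mem_saturation_of_pow_smul_mem n hu hu'
  refine ⟨t * s, S.mul_mem ht hs, ?_⟩
  rw [mul_smul, ← hau, smul_add, smul_comm t]
  exact Submodule.add_mem_sup (A.smul_mem t ha) (Submodule.smul_mem_pointwise_smul _ _ _ htu)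

theorem trans (hAB : A ≤ B) (h₁ : IsSeparatedMod S π A B) (h₂ : IsSeparatedMod S π B C) :
    IsSeparatedMod S π A C where
  mem_saturation_of_smul_mem c hc hπc := by
    obtain ⟨s, hs, hsc⟩ := h₂.mem_saturation_of_smul_mem c hc (saturation_mono hAB hπc)
    refine (smul_mem_saturation_iff hs).mp (h₁.mem_saturation_of_smul_mem _ hsc ?_)
    rw [smul_comm]
    exact (saturation S A).smul_mem s hπc
  mem_saturation_of_forall_pow c hc hπc := by
    have hB : c ∈ saturation S B := h₂.mem_saturation_of_forall_pow c hc fun n =>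
      saturation_mono (sup_le_sup_right hAB _) (hπc n)
    obtain ⟨s, hs, hsc⟩ := id hB
    refine (smul_mem_saturation_iff hs).mp (h₁.mem_saturation_of_forall_pow _ hsc fun n => ?_)
    exact Submodule.smul_mem _ s (h₂.mem_saturation_sup_pow hAB hB (hπc n))

theorem of_chain {B : ℕ → Submodule J W} (hB : Monotone B)
    (h : ∀ n, IsSeparatedMod S π (B n) (B (n + 1))) {m n : ℕ} (hmn : m ≤ n) :
    IsSeparatedMod S π (B m) (B n) := by
  induction n, hmn using Nat.le_induction with
  | base => exact refl _
  | succ n hmn ih => exact ih.trans (hB hmn) (h n)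

theorem iSup {B : ℕ → Submodule J W} (hB : Monotone B)
    (h : ∀ n, IsSeparatedMod S π (B n) (B (n + 1))) : IsSeparatedMod S π (B 0) (⨆ n, B n) where
  mem_saturation_of_smul_mem c hc := by
    obtain ⟨m, hm⟩ := (Submodule.mem_iSup_of_directed B hB.directed_le).mp hc
    exact (of_chain hB h m.zero_le).mem_saturation_of_smul_mem c hm
  mem_saturation_of_forall_pow c hc hπc := by
    obtain ⟨m, hm⟩ := (Submodule.mem_iSup_of_directed B hB.directed_le).mp hc
    refine (of_chain hB h m.zero_le).mem_saturation_of_forall_pow c hm fun n => ?_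
    obtain ⟨s, hs, hsc⟩ := hπc n
    obtain ⟨a, ha, _, hπu, hau⟩ := Submodule.mem_sup.mp hsc
    obtain ⟨u, hu, rfl⟩ := (Submodule.mem_smul_pointwise_iff_exists _ _ _).mp hπu
    obtain ⟨l, hl⟩ := (Submodule.mem_iSup_of_directed B hB.directed_le).mp hu
    refine (of_chain hB h (le_max_left m l)).mem_saturation_sup_pow (hB m.zero_le)
      (le_saturation _ hm) ⟨s, hs, hau ▸ ?_⟩
    exact Submodule.add_mem_sup ha
      (Submodule.smul_mem_pointwise_smul _ _ _ (hB (le_max_right m l) hl))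

end IsSeparatedMod

theorem comap_sup_map (g : U →ₗ[J] W) (A : Submodule J W) (B : Submodule J U) :
    (A ⊔ B.map g).comap g = A.comap g ⊔ B := by
  refine le_antisymm (fun u hu => ?_)
    (sup_le (Submodule.comap_mono le_sup_left)
      ((Submodule.le_comap_map g B).trans (Submodule.comap_mono le_sup_right)))
  obtain ⟨a, ha, _, ⟨b, hb, rfl⟩, hab⟩ := Submodule.mem_sup.mp hu
  rw [← sub_add_cancel u b]
  refine Submodule.add_mem_sup ?_ hb
  rwa [Submodule.mem_comap, map_sub, ← hab, add_sub_cancel_right]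

theorem map_mem_saturation_sup_range_iff (g : U →ₗ[J] W) (A : Submodule J W) (r : J) {u : U} :
    g u ∈ saturation S (A ⊔ r • (A ⊔ LinearMap.range g)) ↔
      u ∈ saturation S (A.comap g ⊔ r • ⊤) := by
  rw [Submodule.smul_sup', ← sup_assoc, sup_eq_left.mpr (Submodule.smul_le_self_of_tower r A),
    LinearMap.range_eq_map, ← Submodule.map_pointwise_smul, ← comap_sup_map, ← comap_saturation,
    Submodule.mem_comap]

theorem isSeparatedMod_comap_top_iff (g : U →ₗ[J] W) (A : Submodule J W) :
    IsSeparatedMod S π (A.comap g) ⊤ ↔ IsSeparatedMod S π A (A ⊔ LinearMap.range g) := by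
  have mem_iff : ∀ {B : Submodule J W}, A ≤ B → ∀ a ∈ A, ∀ w, a + w ∈ saturation S B ↔
      w ∈ saturation S B := fun hAB a ha w =>
    Submodule.add_mem_iff_right _ (le_saturation _ (hAB ha))
  constructor
  · refine fun h => ⟨fun b hb hπb => ?_, fun b hb hπb => ?_⟩
    · obtain ⟨a, ha, _, ⟨u, rfl⟩, rfl⟩ := Submodule.mem_sup.mp hb
      rw [mem_iff le_rfl a ha, ← Submodule.mem_comap, comap_saturation]
      rw [smul_add, mem_iff le_rfl _ (A.smul_mem π ha), ← map_smul, ← Submodule.mem_comap,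
        comap_saturation] at hπb
      exact h.mem_saturation_of_smul_mem u trivial hπb
    · obtain ⟨a, ha, _, ⟨u, rfl⟩, rfl⟩ := Submodule.mem_sup.mp hb
      rw [mem_iff le_rfl a ha, ← Submodule.mem_comap, comap_saturation]
      refine h.mem_saturation_of_forall_pow u trivial fun n => ?_
      rw [← map_mem_saturation_sup_range_iff, ← mem_iff le_sup_left a ha]
      exact hπb n
  · refine fun h => ⟨fun u _ hπu => ?_, fun u _ hπu => ?_⟩
    all_goals
      have hu : g u ∈ A ⊔ LinearMap.range g := Submodule.mem_sup_right ⟨u, rfl⟩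
      rw [← comap_saturation, Submodule.mem_comap]
    · rw [← comap_saturation, Submodule.mem_comap, map_smul] at hπu
      exact h.mem_saturation_of_smul_mem _ hu hπu
    · exact h.mem_saturation_of_forall_pow _ hu fun n =>
        (map_mem_saturation_sup_range_iff g A _).mpr (hπu n)

end Separation

section GenericSeparation

universe v

variable {J W U : Type*} [CommRing J] [AddCommGroup W] [Module J W] [AddCommGroup U] [Module J U]

/-- The multiplicative set of elements not divisible by a prime element `π`; localizing at it is
localizing at the prime ideal `(π)`. -/
def nonMultiples {π : J} (hπ : Prime π) : Submonoid J where
  carrier := {s | ¬π ∣ s}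
  one_mem' := hπ.not_dvd_one
  mul_mem' hs ht h := (hπ.dvd_or_dvd h).elim hs ht

/-- For `A ≤ B`, the localization of `B/A` at `(π)` is `π`-torsion-free and `π`-adically Hausdorff
for all prime elements `π` of `J` not dividing some fixed `α ≠ 0`. -/
def GenericallySeparated (A B : Submodule J W) : Prop :=
  ∃ α : J, α ≠ 0 ∧ ∀ (π : J) (hπ : Prime π), ¬π ∣ α → IsSeparatedMod (nonMultiples hπ) π A B

/-- `HasGenericSeparation J R`: every finitely generated module over the `J`-algebra `R` is
generically separated over `J`. -/
def HasGenericSeparation (J R : Type*) [CommRing J] [Ring R] [Algebra J R] : Prop :=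
  ∀ (M : Type v) [AddCommGroup M] [Module J M] [Module R M] [IsScalarTower J R M]
    [Module.Finite R M], GenericallySeparated (⊥ : Submodule J M) ⊤

theorem GenericallySeparated.trans [NoZeroDivisors J] {A B C : Submodule J W} (hAB : A ≤ B)
    (h₁ : GenericallySeparated A B) (h₂ : GenericallySeparated B C) :
    GenericallySeparated A C := by
  obtain ⟨α, hα, h₁⟩ := h₁
  obtain ⟨β, hβ, h₂⟩ := h₂
  exact ⟨α * β, mul_ne_zero hα hβ, fun π hπ hd =>
    (h₁ π hπ fun h => hd (h.mul_right β)).trans hAB (h₂ π hπ fun h => hd (h.mul_left α))⟩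

theorem genericallySeparated_comap_top_iff (g : U →ₗ[J] W) (A : Submodule J W) :
    GenericallySeparated (A.comap g) ⊤ ↔ GenericallySeparated A (A ⊔ LinearMap.range g) := by
  simp only [GenericallySeparated, isSeparatedMod_comap_top_iff]

section Domain

variable [IsDomain J] [IsNoetherianRing J]

theorem isSeparatedMod_nonMultiples_bot_top {π : J} (hπ : Prime π) :
    IsSeparatedMod (nonMultiples hπ) π (⊥ : Ideal J) ⊤ where
  mem_saturation_of_smul_mem := by
    rintro b - ⟨s, hs, h⟩
    refine ⟨s, hs, ?_⟩
    rw [smul_comm] at h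
    exact (mul_eq_zero.mp h).resolve_left hπ.ne_zero
  mem_saturation_of_forall_pow b _ h := by
    suffices b = 0 from le_saturation _ this
    by_contra hb
    obtain ⟨n, hn⟩ := FiniteMultiplicity.of_not_isUnit hπ.not_isUnit hb
    obtain ⟨s, hs, hsb⟩ := h (n + 1)
    rw [bot_sup_eq] at hsb
    obtain ⟨u, -, hu⟩ := (Submodule.mem_smul_pointwise_iff_exists _ _ _).mp hsb
    exact hn (hπ.pow_dvd_of_dvd_mul_left _ hs ⟨u, hu.symm⟩)

theorem genericallySeparated_ideal_top (I : Ideal J) : GenericallySeparated I ⊤ := by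
  obtain rfl | hI := eq_or_ne I ⊥
  · exact ⟨1, one_ne_zero, fun _ hπ _ => isSeparatedMod_nonMultiples_bot_top hπ⟩
  · obtain ⟨α, hαI, hα⟩ := Submodule.exists_mem_ne_zero_of_ne_bot hI
    have killed : ∀ (π : J) (hπ : Prime π), ¬π ∣ α → ∀ b, b ∈ saturation (nonMultiples hπ) I :=
      fun π hπ hd b => ⟨α, hd, I.mul_mem_right b hαI⟩
    exact ⟨α, hα, fun π hπ hd => ⟨fun b _ _ => killed π hπ hd b, fun b _ _ => killed π hπ hd b⟩⟩

theorem genericallySeparated_bot_top_of_finite [Module.Finite J W] :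
    GenericallySeparated (⊥ : Submodule J W) ⊤ := by
  classical
  obtain ⟨T, hT⟩ := Module.Finite.fg_top (R := J) (M := W)
  rw [← hT]
  clear hT
  induction T using Finset.induction_on with
  | empty =>
    rw [Finset.coe_empty, Submodule.span_empty]
    exact ⟨1, one_ne_zero, fun π hπ _ => .refl ⊥⟩
  | insert w T _ ih =>
    refine ih.trans bot_le ?_
    rw [Finset.coe_insert, Submodule.span_insert, sup_comm, ← LinearMap.range_toSpanSingleton,
      ← genericallySeparated_comap_top_iff]
    exact genericallySeparated_ideal_top _

theorem hasGenericSeparation_of_finite {R : Type*} [Ring R] [Algebra J R] [Module.Finite J R] :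
    HasGenericSeparation J R := fun M _ _ _ _ _ =>
  have := Module.Finite.trans (R := J) R M
  genericallySeparated_bot_top_of_finite

end Domain

theorem exists_forall_isSeparatedMod_of_monotone [IsDomain J] {A : Type*} {V : Type v}
    [Ring A] [Algebra J A] [AddCommGroup V] [Module J V] [Module A V] [IsScalarTower J A V]
    [IsNoetherian A V]
    (hA : HasGenericSeparation.{v} J A) (K : ℕ →o Submodule A V) :
    ∃ α : J, α ≠ 0 ∧ ∀ (π : J) (hπ : Prime π), ¬π ∣ α →
      ∀ n, IsSeparatedMod (nonMultiples hπ) π ((K n).restrictScalars J) ⊤ := by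
  have separated : ∀ n, GenericallySeparated ((K n).restrictScalars J) ⊤ := fun n => by
    have hK : (⊥ : Submodule J (V ⧸ K n)).comap ((K n).mkQ.restrictScalars J) =
        (K n).restrictScalars J := by
      ext v
      exact Submodule.Quotient.mk_eq_zero (K n)
    have hrange : LinearMap.range ((K n).mkQ.restrictScalars J) = ⊤ :=
      LinearMap.range_eq_top.mpr (K n).mkQ_surjective
    rw [← hK, genericallySeparated_comap_top_iff, hrange, bot_sup_eq]
    exact hA (V ⧸ K n)
  choose α hα h using separated
  obtain ⟨d, hd⟩ := monotone_stabilizes_iff_noetherian.mpr ‹_› K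
  refine ⟨∏ i ∈ Finset.range (d + 1), α i, Finset.prod_ne_zero_iff.mpr fun i _ => hα i,
    fun π hπ hπα n => ?_⟩
  have hmin : K n = K (min n d) := by
    obtain hn | hn := le_total n d
    · rw [min_eq_left hn]
    · rw [min_eq_right hn, hd n hn]
  rw [hmin]
  exact h _ π hπ fun hdvd => hπα (hdvd.trans (Finset.dvd_prod_of_mem α
    (Finset.mem_range.mpr (Nat.lt_succ_of_le (min_le_right n d)))))

theorem HasGenericSeparation.of_surjective {R S : Type*} [Ring R] [Ring S] [Algebra J R]
    [Algebra J S] (f : R →ₐ[J] S) (hf : Function.Surjective f)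
    (hR : HasGenericSeparation.{v} J R) : HasGenericSeparation.{v} J S := by
  intro M _ _ _ _ _
  let _ : Module R M := Module.compHom M f.toRingHom
  have : RingHomSurjective f.toRingHom := ⟨hf⟩
  have : IsScalarTower J R M := ⟨fun j r m => by
    change f (j • r) • m = j • f r • m
    rw [map_smul, smul_assoc]⟩
  let ι : M →ₛₗ[f.toRingHom] M := ⟨AddHom.id M, fun _ _ => rfl⟩
  have : Module.Finite R M := ι.finite_iff_of_bijective Function.bijective_id |>.mpr inferInstance
  exact hR M

end GenericSeparation

section SkewLaurent

universe v

variable {J S : Type*} [CommRing J] [Ring S] [Algebra J S]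

/-- The units of `S` normalizing a subalgebra `A`, so that `A` and the powers of such a unit span
a skew Laurent extension of `A`. -/
def normalizingUnits (A : Subalgebra J S) : Subgroup Sˣ where
  carrier := {u | ∀ a : S, ↑u * a * ↑u⁻¹ ∈ A ↔ a ∈ A}
  one_mem' a := by simp only [Units.val_one, inv_one, one_mul, mul_one]
  mul_mem' {u v} hu hv a := by
    rw [← hv a, ← hu (v * a * _), mul_inv_rev, Units.val_mul, Units.val_mul]
    simp only [mul_assoc]
  inv_mem' {u} hu a := by
    rw [← hu, inv_inv]
    simp only [mul_assoc, Units.mul_inv, mul_one, Units.mul_inv_cancel_left]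

variable {A : Subalgebra J S} {M : Type v} [AddCommGroup M] [Module S M]

section shift

/-- The submodule `u • V`; it is again stable under `A` because `u` normalizes `A`. -/
def shiftSubmodule (u : normalizingUnits A) (V : Submodule A M) : Submodule A M where
  carrier := {m | (u⁻¹ : Sˣ) • m ∈ V}
  zero_mem' := by simp only [Set.mem_ofPred_eq, smul_zero, zero_mem]
  add_mem' hv hw := by
    simp only [Set.mem_ofPred_eq, smul_add] at *
    exact V.add_mem hv hw
  smul_mem' a m hm := by
    have conj_mem : (↑(u⁻¹ : Sˣ) : S) * a * ↑(u : Sˣ) ∈ A := by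
      simpa only [Subgroup.coe_inv, inv_inv] using (u⁻¹.2 a).mpr a.2
    have h := V.smul_mem ⟨_, conj_mem⟩ hm
    rwa [Subalgebra.smul_def, Units.smul_def, ← mul_smul, mul_assoc, Units.mul_inv, mul_one,
      mul_smul, ← Units.smul_def] at h

theorem mem_shiftSubmodule {u : normalizingUnits A} {V : Submodule A M} {m : M} :
    m ∈ shiftSubmodule u V ↔ (u⁻¹ : Sˣ) • m ∈ V :=
  Iff.rfl

/-- Translation by a normalizing unit, as an automorphism of the lattice of `A`-submodules. -/
def shift (u : normalizingUnits A) : Submodule A M ≃o Submodule A M :=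
  Equiv.toOrderIso
    { toFun := shiftSubmodule u
      invFun := shiftSubmodule u⁻¹
      left_inv V := by
        ext m
        simp only [mem_shiftSubmodule, Subgroup.coe_inv, inv_inv, inv_smul_smul]
      right_inv V := by
        ext m
        simp only [mem_shiftSubmodule, Subgroup.coe_inv, inv_inv, smul_inv_smul] }
    (fun _ _ h _ hm => h hm) (fun _ _ h _ hm => h hm)

theorem mem_shift {u : normalizingUnits A} {V : Submodule A M} {m : M} :
    m ∈ shift u V ↔ (u⁻¹ : Sˣ) • m ∈ V :=
  Iff.rfl

theorem smul_mem_shift {u : normalizingUnits A} {V : Submodule A M} {m : M} :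
    (u : Sˣ) • m ∈ shift u V ↔ m ∈ V := by
  rw [mem_shift, inv_smul_smul]

theorem shift_one (V : Submodule A M) : shift 1 V = V := by
  ext m
  rw [mem_shift, OneMemClass.coe_one, inv_one, one_smul]

theorem shift_shift (u w : normalizingUnits A) (V : Submodule A M) :
    shift u (shift w V) = shift (u * w) V := by
  ext m
  rw [mem_shift, mem_shift, mem_shift, smul_smul, Subgroup.coe_mul, mul_inv_rev]

end shift

section slab

variable (x : normalizingUnits A) (V : Submodule A M)

/-- The sum of the translates `x ^ i • V` over `a ≤ i < b`. -/
def slab (a b : ℤ) : Submodule A M :=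
  ⨆ i ∈ Set.Ico a b, shift (x ^ i) V

variable {x V}

theorem slab_mono {a b c d : ℤ} (hca : c ≤ a) (hbd : b ≤ d) : slab x V a b ≤ slab x V c d :=
  biSup_mono fun _ hi => Set.Ico_subset_Ico hca hbd hi

theorem shift_slab (j a b : ℤ) :
    shift (x ^ j) (slab x V a b) = slab x V (a + j) (b + j) := by
  simp only [slab, OrderIso.map_iSup, shift_shift, ← zpow_add]
  rw [← Set.image_add_const_Ico, iSup_image]
  simp only [add_comm j]

theorem zpow_smul_mem_slab_iff {j a b : ℤ} {m : M} :
    ((x ^ j : normalizingUnits A) : Sˣ) • m ∈ slab x V (a + j) (b + j) ↔ m ∈ slab x V a b := by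
  rw [← shift_slab, smul_mem_shift]

theorem slab_self (a : ℤ) : slab x V a a = ⊥ := by
  simp only [slab, Set.Ico_self, Set.mem_empty_iff_false, iSup_false, iSup_bot]

theorem slab_add_one {a b : ℤ} (hab : a ≤ b) :
    slab x V a (b + 1) = slab x V a b ⊔ shift (x ^ b) V := by
  rw [slab, ← Order.succ_eq_add_one, Set.Ico_succ_right_eq_Icc, ← Set.Ico_insert_right hab,
    iSup_insert, sup_comm, slab]

theorem slab_inv (a b : ℤ) : slab x⁻¹ V a b = slab x V (1 - b) (1 - a) := by
  refine le_antisymm ?_ ?_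
  · refine iSup₂_le fun i hi => ?_
    rw [inv_zpow']
    exact le_biSup (fun i => shift (x ^ i) V) (show -i ∈ Set.Ico (1 - b) (1 - a) by
      simp only [Set.mem_Ico] at hi ⊢; lia)
  · refine iSup₂_le fun i hi => ?_
    rw [← neg_neg i, ← inv_zpow']
    exact le_biSup (fun i => shift (x⁻¹ ^ i) V) (show -i ∈ Set.Ico a b by
      simp only [Set.mem_Ico] at hi ⊢; lia)

theorem iSup_slab : ⨆ n : ℕ, slab x V (-n) n = ⨆ i : ℤ, shift (x ^ i) V := by
  refine le_antisymm (iSup_le fun n => iSup₂_le fun i _ =>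
    le_iSup (fun i : ℤ => shift (x ^ i) V) i) (iSup_le fun i => ?_)
  refine le_iSup_of_le (i.natAbs + 1) (le_biSup (fun i => shift (x ^ i) V) ?_)
  simp only [Set.mem_Ico]
  lia

theorem monotone_slab_neg_nat : Monotone fun n : ℕ => slab x V (-n) n := fun _ _ h =>
  slab_mono (by lia) (by lia)

end slab

section Noetherian

variable {x : normalizingUnits A} {V : Submodule A M}

/-- For an `S`-submodule `N`, the submodules `{v ∈ V | v ∈ N + ∑_{-n ≤ i < 0} x ^ i • V}` of `V`;
they play the role of the ideals of leading coefficients in Hilbert's basis theorem. -/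
def leadingTerms (x : normalizingUnits A) (V : Submodule A M) (N : Submodule S M) :
    ℕ →o Submodule A V where
  toFun n := (N.restrictScalars A ⊔ slab x V (-n) 0).comap V.subtype
  monotone' _ _ h := Submodule.comap_mono (sup_le_sup_left (slab_mono (by lia) le_rfl) _)

theorem mem_leadingTerms {N : Submodule S M} {n : ℕ} {v : V} :
    v ∈ leadingTerms x V N n ↔ (v : M) ∈ N.restrictScalars A ⊔ slab x V (-n) 0 :=
  Iff.rfl

theorem mem_leadingTerms_bot {n : ℕ} {v : V} :
    v ∈ leadingTerms x V (⊥ : Submodule S M) n ↔ (v : M) ∈ slab x V (-n) 0 := by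
  rw [mem_leadingTerms, Submodule.restrictScalars_bot, bot_sup_eq]

theorem leadingTerms_mono : Monotone (leadingTerms x V) := fun _ _ h _ =>
  Submodule.comap_mono (sup_le_sup_right (show Submodule.restrictScalars A _ ≤ _ from h) _)

theorem inf_slab_le_of_leadingTerms_le {N N' : Submodule S M} (hN : N ≤ N')
    (h : leadingTerms x V N' ≤ leadingTerms x V N) (n : ℕ) {m : M} (hmN' : m ∈ N')
    (hm : m ∈ slab x V (-n) 0) : m ∈ N := by
  -- Translate `m` so that its top term lies in `V`, and cancel that term by an element of `N`.
  induction n generalizing m with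
  | zero =>
    rw [Nat.cast_zero, neg_zero, slab_self, Submodule.mem_bot] at hm
    exact hm ▸ N.zero_mem
  | succ n ih =>
    have hxm : (x : Sˣ) • m ∈ slab x V (-n) 0 ⊔ V := by
      have h := (zpow_smul_mem_slab_iff (j := 1)).mpr hm
      rwa [zpow_one, Nat.cast_succ, neg_add_rev, neg_add_cancel_comm, slab_add_one (by lia),
        zpow_zero, shift_one] at h
    obtain ⟨w, hw, v, hv, hwv⟩ := Submodule.mem_sup.mp hxm
    have hv' : v ∈ N.restrictScalars A ⊔ slab x V (-n) 0 := by
      refine h n (show (⟨v, hv⟩ : V) ∈ leadingTerms x V N' n from ?_)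
      rw [mem_leadingTerms, Submodule.coe_mk, eq_sub_of_add_eq' hwv]
      exact sub_mem (Submodule.mem_sup_left (N'.smul_mem _ hmN')) (Submodule.mem_sup_right hw)
    obtain ⟨y, hy, w', hw', rfl⟩ := Submodule.mem_sup.mp hv'
    have hxmy : (x : Sˣ) • m - y ∈ N := by
      refine ih (sub_mem (N'.smul_mem _ hmN') (hN hy)) ?_
      rw [← hwv, add_left_comm, add_sub_cancel_left]
      exact add_mem hw hw'
    exact (N.smul_mem_iff' _).mp ((Submodule.sub_mem_iff_left N hy).mp hxmy)

theorem strictMono_leadingTerms (hV : ⨆ i : ℤ, shift (x ^ i) V = ⊤) :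
    StrictMono (leadingTerms x V) := fun N N' hlt => by
  refine lt_of_le_of_ne (leadingTerms_mono hlt.le) fun heq => hlt.not_ge fun m hm => ?_
  rw [← iSup_slab] at hV
  obtain ⟨n, hn⟩ := (Submodule.mem_iSup_of_directed _ monotone_slab_neg_nat.directed_le).mp
    (hV ▸ Submodule.mem_top : m ∈ _)
  refine (N.smul_mem_iff' ((x ^ (-n : ℤ) : normalizingUnits A) : Sˣ)).mp
    (inf_slab_le_of_leadingTerms_le hlt.le heq.ge (n + n) (N'.smul_mem _ hm) ?_)
  rwa [← zpow_smul_mem_slab_iff (j := -n), add_neg_cancel, ← neg_add, ← Nat.cast_add] at hn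

theorem isNoetherian_of_iSup_shift_eq_top [IsNoetherian A V]
    (hV : ⨆ i : ℤ, shift (x ^ i) V = ⊤) : IsNoetherian S M :=
  isNoetherian_iff'.mpr (strictMono_leadingTerms hV).wellFoundedGT

end Noetherian

section GenericSeparation

variable [Module J M] [IsScalarTower J S M] {x : normalizingUnits A} {V : Submodule A M}

theorem isSeparatedMod_slab_add_one {π : J} {T : Submonoid J}
    (h : ∀ n, IsSeparatedMod T π ((leadingTerms x V ⊥ n).restrictScalars J) ⊤)
    {a b : ℤ} (hab : a ≤ b) :
    IsSeparatedMod T π ((slab x V a b).restrictScalars J)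
      ((slab x V a (b + 1)).restrictScalars J) := by
  let g : V →ₗ[J] M :=
    Algebra.lsmul J J M (((x ^ b : normalizingUnits A) : Sˣ) : S) ∘ₗ V.subtype.restrictScalars J
  have hg : ∀ v : V, g v = ((x ^ b : normalizingUnits A) : Sˣ) • (v : M) := fun _ => rfl
  have hcomap : ((slab x V a b).restrictScalars J).comap g =
      (leadingTerms x V ⊥ (b - a).toNat).restrictScalars J := by
    ext v
    have hslab : slab x V a b = shift (x ^ b) (slab x V (-(b - a).toNat) 0) := by
      rw [shift_slab, Int.toNat_of_nonneg (sub_nonneg.mpr hab), neg_sub, sub_add_cancel, zero_add]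
    rw [Submodule.mem_comap, hg, Submodule.restrictScalars_mem, hslab, smul_mem_shift,
      Submodule.restrictScalars_mem, mem_leadingTerms_bot]
  have hrange : (slab x V a b).restrictScalars J ⊔ LinearMap.range g =
      (slab x V a (b + 1)).restrictScalars J := by
    have : LinearMap.range g = (shift (x ^ b) V).restrictScalars J := by
      ext m
      refine ⟨?_, fun hm => ⟨⟨_, mem_shift.mp hm⟩,
        smul_inv_smul ((x ^ b : normalizingUnits A) : Sˣ) m⟩⟩
      rintro ⟨v, rfl⟩
      exact smul_mem_shift.mpr v.2
    rw [this, slab_add_one hab, Submodule.restrictScalars_sup]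
  rw [← hrange, ← isSeparatedMod_comap_top_iff, hcomap]
  exact h _

theorem exists_forall_isSeparatedMod_slab [IsDomain J] [IsNoetherian A V]
    (hA : HasGenericSeparation.{v} J A) (x : normalizingUnits A) :
    ∃ α : J, α ≠ 0 ∧ ∀ (π : J) (hπ : Prime π), ¬π ∣ α → ∀ a b : ℤ, a ≤ b →
      IsSeparatedMod (nonMultiples hπ) π ((slab x V a b).restrictScalars J)
        ((slab x V a (b + 1)).restrictScalars J) := by
  obtain ⟨α, hα, h⟩ := exists_forall_isSeparatedMod_of_monotone hA (leadingTerms x V ⊥)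
  exact ⟨α, hα, fun π hπ hd a b hab => isSeparatedMod_slab_add_one (h π hπ hd) hab⟩

theorem genericallySeparated_of_iSup_shift_eq_top [IsDomain J] [IsNoetherian A V]
    (hA : HasGenericSeparation.{v} J A) (hV : ⨆ i : ℤ, shift (x ^ i) V = ⊤) :
    GenericallySeparated (⊥ : Submodule J M) ⊤ := by
  obtain ⟨α, hα, hright⟩ := exists_forall_isSeparatedMod_slab hA x (V := V)
  obtain ⟨β, hβ, hleft⟩ := exists_forall_isSeparatedMod_slab hA x⁻¹ (V := V)
  refine ⟨α * β, mul_ne_zero hα hβ, fun π hπ hd => ?_⟩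
  -- The symmetric slab grows by one translate on the right, then by one on the left; the latter is
  -- a right extension for `x⁻¹`.
  have symmetric_step : ∀ n : ℕ, IsSeparatedMod (nonMultiples hπ) π
      ((slab x V (-n) n).restrictScalars J)
      ((slab x V (-(n + 1 : ℕ)) (n + 1 : ℕ)).restrictScalars J) := fun n => by
    have left := hleft π hπ (fun h => hd (h.mul_left α)) (-n) (n + 1) (by lia)
    have right := hright π hπ (fun h => hd (h.mul_right β)) (-n) n (by lia)
    rw [slab_inv, slab_inv, show (1 : ℤ) - (n + 1) = -n by ring,
      show (1 : ℤ) - -n = (n + 1 : ℕ) by push_cast; ring,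
      show (1 : ℤ) - (n + 1 + 1) = -(n + 1 : ℕ) by push_cast; ring] at left
    exact right.trans (slab_mono (x := x) (V := V) le_rfl (by lia)) left
  have h := IsSeparatedMod.iSup (B := fun n : ℕ => (slab x V (-n) n).restrictScalars J)
    monotone_slab_neg_nat symmetric_step
  rwa [← Submodule.restrictScalars_iSup, iSup_slab, hV, Nat.cast_zero, neg_zero, slab_self,
    Submodule.restrictScalars_bot, Submodule.restrictScalars_top] at h

end GenericSeparation

end SkewLaurent

section SkewLaurentRing

universe v

variable {J S : Type*} [CommRing J] [Ring S] [Algebra J S] {A : Subalgebra J S}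
  {x : normalizingUnits A}

theorem iSup_shift_span_eq_top (hx : ⨆ i : ℤ, shift (x ^ i) (Submodule.span A {(1 : S)}) = ⊤)
    {M : Type*} [AddCommGroup M] [Module S M] {T : Set M} (hT : Submodule.span S T = ⊤) :
    ⨆ i : ℤ, shift (x ^ i) (Submodule.span A T) = ⊤ := by
  refine eq_top_iff.mpr fun m _ => ?_
  induction (hT ▸ Submodule.mem_top : m ∈ Submodule.span S T) using
    Submodule.closure_induction with
  | zero => exact Submodule.zero_mem _
  | add m m' _ _ hm hm' => exact Submodule.add_mem _ (hm trivial) (hm' trivial)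
  | smul_mem s t ht =>
    induction (hx ▸ Submodule.mem_top : s ∈ _) using Submodule.iSup_induction' with
    | zero => exact (zero_smul S t).symm ▸ Submodule.zero_mem _
    | add r s _ _ hr hs =>
      exact (add_smul r s t).symm ▸ Submodule.add_mem _ (hr trivial) (hs trivial)
    | mem i s hs =>
      obtain ⟨a, ha⟩ := Submodule.mem_span_singleton.mp (mem_shift.mp hs)
      refine Submodule.mem_iSup_of_mem i (mem_shift.mpr ?_)
      rw [← smul_assoc, ← ha, smul_assoc, one_smul]
      exact Submodule.smul_mem _ a (Submodule.subset_span ht)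

theorem isNoetherianRing_of_iSup_shift_eq_top [IsNoetherianRing A]
    (hx : ⨆ i : ℤ, shift (x ^ i) (Submodule.span A {(1 : S)}) = ⊤) : IsNoetherianRing S :=
  have := isNoetherian_span_of_finite A (Set.finite_singleton (1 : S))
  isNoetherian_of_iSup_shift_eq_top hx

theorem HasGenericSeparation.of_iSup_shift_eq_top [IsDomain J] [IsNoetherianRing A]
    (hA : HasGenericSeparation.{v} J A)
    (hx : ⨆ i : ℤ, shift (x ^ i) (Submodule.span A {(1 : S)}) = ⊤) :
    HasGenericSeparation.{v} J S := by
  intro M _ _ _ _ _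
  obtain ⟨T, hT⟩ := Module.Finite.fg_top (R := S) (M := M)
  have := isNoetherian_span_of_finite A T.finite_toSet
  exact genericallySeparated_of_iSup_shift_eq_top hA (iSup_shift_span_eq_top hx hT)

end SkewLaurentRing

section GroupRing

open MonoidAlgebra Subgroup

universe v

variable (J : Type*) [CommRing J] {H K : Type*} [Group H] [Group K] (f : H →* K)

/-- The group element `k` as a unit of the group ring `J[K]`. -/
noncomputable def groupUnit : K →* (MonoidAlgebra J K)ˣ :=
  (Units.map (of J K)).comp toUnits.toMonoidHom

variable {f}

theorem single_mem_range_mapDomainAlgHom {k : K} (hk : k ∈ f.range) (r : J) :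
    single k r ∈ (mapDomainAlgHom J J f).range := by
  obtain ⟨h, rfl⟩ := hk
  exact ⟨single h r, mapDomain_single⟩

variable {J} in
@[simp]
theorem coe_groupUnit (k : K) : (groupUnit J k : MonoidAlgebra J K) = single k 1 :=
  rfl

theorem groupUnit_conj_mem_range (hf : f.range.Normal) (k : K) {a : MonoidAlgebra J K}
    (ha : a ∈ (mapDomainAlgHom J J f).range) :
    ↑(groupUnit J k) * a * ↑(groupUnit J k)⁻¹ ∈ (mapDomainAlgHom J J f).range := by
  obtain ⟨b, rfl⟩ := ha
  induction b using MonoidAlgebra.induction_linear with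
  | zero => simp only [map_zero, mul_zero, zero_mul, zero_mem]
  | add b c hb hc => simpa only [map_add, mul_add, add_mul] using add_mem hb hc
  | single h r =>
    have hkh := single_mem_range_mapDomainAlgHom J (hf.conj_mem (f h) ⟨h, rfl⟩ k) r
    rw [← map_inv, coe_groupUnit, coe_groupUnit]
    change single k 1 * mapDomain f (single h r) * single k⁻¹ 1 ∈ _
    rwa [mapDomain_single, single_mul_single, single_mul_single, one_mul, mul_one]

theorem groupUnit_mem_normalizingUnits (hf : f.range.Normal) (k : K) :
    groupUnit J k ∈ normalizingUnits (mapDomainAlgHom J J f).range := fun a => by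
  refine ⟨fun ha => ?_, groupUnit_conj_mem_range J hf k⟩
  have h := groupUnit_conj_mem_range J hf k⁻¹ ha
  rwa [map_inv, inv_inv, ← mul_assoc, ← mul_assoc, Units.inv_mul, one_mul, mul_assoc, Units.inv_mul,
    mul_one] at h

theorem iSup_shift_groupUnit_eq_top (hf : f.range.Normal) {x : K} (hx : f.range ⊔ zpowers x = ⊤) :
    ⨆ i : ℤ, shift ((⟨groupUnit J x, groupUnit_mem_normalizingUnits J hf x⟩ :
      normalizingUnits (mapDomainAlgHom J J f).range) ^ i)
      (Submodule.span (mapDomainAlgHom J J f).range {(1 : MonoidAlgebra J K)}) = ⊤ := by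
  refine eq_top_iff.mpr fun s _ => ?_
  induction s using MonoidAlgebra.induction_linear with
  | zero => exact Submodule.zero_mem _
  | add s t hs ht => exact Submodule.add_mem _ (hs trivial) (ht trivial)
  | single k r =>
    obtain ⟨-, ⟨n, rfl⟩, -, ⟨h, rfl⟩, rfl⟩ :=
      mem_sup_of_normal_right.mp (sup_comm f.range _ ▸ hx ▸ mem_top k)
    have hfh := single_mem_range_mapDomainAlgHom J (f := f) ⟨h, rfl⟩ r
    have factor : single (x ^ n * f h) r = groupUnit J x ^ n • single (f h) r := by
      rw [← map_zpow, Units.smul_def, coe_groupUnit, smul_eq_mul, single_mul_single, one_mul]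
    refine Submodule.mem_iSup_of_mem n (factor ▸ smul_mem_shift.mpr ?_)
    exact Submodule.mem_span_singleton.mpr ⟨⟨_, hfh⟩, mul_one _⟩

theorem isNoetherianRing_monoidAlgebra_of_range_sup_zpowers (hf : f.range.Normal) {x : K}
    (hx : f.range ⊔ zpowers x = ⊤) [IsNoetherianRing (MonoidAlgebra J H)] :
    IsNoetherianRing (MonoidAlgebra J K) :=
  have := isNoetherianRing_of_surjective _ _ (mapDomainAlgHom J J f).rangeRestrict.toRingHom
    (mapDomainAlgHom J J f).rangeRestrict_surjective
  isNoetherianRing_of_iSup_shift_eq_top (iSup_shift_groupUnit_eq_top J hf hx)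

theorem HasGenericSeparation.monoidAlgebra_of_range_sup_zpowers [IsDomain J]
    (hf : f.range.Normal) {x : K} (hx : f.range ⊔ zpowers x = ⊤)
    [IsNoetherianRing (MonoidAlgebra J H)]
    (hH : HasGenericSeparation.{v} J (MonoidAlgebra J H)) :
    HasGenericSeparation.{v} J (MonoidAlgebra J K) :=
  have := isNoetherianRing_of_surjective _ _ (mapDomainAlgHom J J f).rangeRestrict.toRingHom
    (mapDomainAlgHom J J f).rangeRestrict_surjective
  (hH.of_surjective _ (mapDomainAlgHom J J f).rangeRestrict_surjective).of_iSup_shift_eq_top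
    (iSup_shift_groupUnit_eq_top J hf hx)

end GroupRing

section Polycyclic

open Subgroup
open scoped commutatorElement

variable {G : Type*} [Group G]

/-- A subgroup reached from the trivial one by successively adjoining elements normalizing the
subgroup already built, that is, a subgroup with a subnormal series with cyclic factors. -/
inductive IsPolycyclic : Subgroup G → Prop
  | bot : IsPolycyclic ⊥
  | sup_zpowers {H : Subgroup G} {x : G} (hH : IsPolycyclic H)
      (hx : x ∈ normalizer (H : Set G)) : IsPolycyclic (H ⊔ zpowers x)

theorem IsPolycyclic.finite_of_isMulTorsion (hG : IsMulTorsion G) {H : Subgroup G}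
    (hH : IsPolycyclic H) : (H : Set G).Finite := by
  induction hH with
  | bot => exact Set.finite_singleton 1
  | @sup_zpowers H x _ hx ih =>
    rw [coe_mul_of_right_le_normalizer_left _ _ (zpowers_le.mpr hx)]
    exact ih.mul (finite_zpowers.mpr (hG x))

theorem IsPolycyclic.sup_closure {H L : Subgroup G} (hH : IsPolycyclic H) (hHL : H ≤ L)
    (hL : ⁅L, L⁆ ≤ H) {T : Set G} (hT : T.Finite) (hTL : T ⊆ L) :
    IsPolycyclic (H ⊔ closure T) := by
  induction T, hT using Set.Finite.induction_on with
  | empty => rwa [Subgroup.closure_empty, sup_bot_eq]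
  | @insert x T _ _ ih =>
    obtain ⟨hxL, hTL⟩ := Set.insert_subset_iff.mp hTL
    have hle : H ⊔ closure T ≤ L := sup_le hHL ((closure_le L).mpr hTL)
    have hx : zpowers x ≤ normalizer ↑(H ⊔ closure T) :=
      le_normalizer_iff_commutator_le_left.mpr <|
        (commutator_mono hle (zpowers_le.mpr hxL)).trans (hL.trans le_sup_left)
    rw [Set.insert_eq, Subgroup.closure_union, ← zpowers_eq_closure, sup_comm (zpowers x),
      ← sup_assoc]
    exact (ih hTL).sup_zpowers (zpowers_le.mp hx)

theorem commutator_closure_le {N : Subgroup G} [N.Normal] {S T : Set G}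
    (h : ∀ t ∈ T, ∀ s ∈ S, ⁅t, s⁆ ∈ N) : ⁅closure T, closure S⁆ ≤ N := by
  rw [← QuotientGroup.ker_mk' N, ← Subgroup.map_eq_bot_iff, map_commutator,
    commutator_eq_bot_iff_le_centralizer, MonoidHom.map_closure, MonoidHom.map_closure,
    centralizer_closure, closure_le]
  rintro _ ⟨t, ht, rfl⟩
  rw [SetLike.mem_coe, mem_centralizer_iff_commutator_eq_one]
  rintro _ ⟨s, hs, rfl⟩
  rw [← map_commutatorElement, ← MonoidHom.mem_ker, QuotientGroup.ker_mk', ← inv_mem_iff,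
    commutatorElement_inv]
  exact h t ht s hs

theorem exists_finite_lowerCentralSeries_eq_sup_closure [Group.FG G] (n : ℕ) :
    ∃ T : Set G, T.Finite ∧ (⊤ : Subgroup G).lowerCentralSeries n =
      (⊤ : Subgroup G).lowerCentralSeries (n + 1) ⊔ closure T := by
  obtain ⟨S, hS, hSfin⟩ := Group.fg_iff.mp ‹Group.FG G›
  set γ := (⊤ : Subgroup G).lowerCentralSeries
  have γ_succ (n : ℕ) : γ (n + 1) = ⁅γ n, ⊤⁆ := Subgroup.lowerCentralSeries_succ _ n
  induction n with
  | zero => exact ⟨S, hSfin, by rw [hS, sup_top_eq]; rfl⟩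
  | succ n ih =>
    obtain ⟨T, hTfin, hT⟩ := ih
    refine ⟨Set.image2 (⁅·, ·⁆) T S, hTfin.image2 _ hSfin, ?_⟩
    set N := γ (n + 2) ⊔ closure (Set.image2 (⁅·, ·⁆) T S)
    have hTγ : T ⊆ γ n := hT ▸ subset_closure.trans (SetLike.coe_subset_coe.mpr le_sup_right)
    have hN : N ≤ γ (n + 1) := by
      refine sup_le (Subgroup.lowerCentralSeries_antitone _ (Nat.le_succ _)) ((closure_le _).mpr ?_)
      rintro _ ⟨t, ht, s, -, rfl⟩
      exact γ_succ n ▸ commutator_mem_commutator (hTγ ht) (mem_top s)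
    have N_normal : N.Normal := commutator_top_right_le_iff.mp <|
      (commutator_mono hN le_rfl).trans ((γ_succ (n + 1)).ge.trans le_sup_left)
    refine le_antisymm ?_ hN
    rw [γ_succ, hT, ← closure_eq (γ (n + 1)), ← Subgroup.closure_union, ← hS]
    refine commutator_closure_le ?_
    rintro t (ht | ht) s hs
    · exact mem_sup_left (γ_succ (n + 1) ▸ commutator_mem_commutator ht (mem_top s))
    · exact mem_sup_right (subset_closure (Set.mem_image2_of_mem ht hs))

theorem isPolycyclic_top_of_isNilpotent [Group.FG G] [Group.IsNilpotent G] :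
    IsPolycyclic (⊤ : Subgroup G) := by
  obtain ⟨n, hn⟩ := Subgroup.nilpotent_iff_lowerCentralSeries.mp ‹Group.IsNilpotent G›
  refine Nat.decreasingInduction
    (motive := fun m _ => IsPolycyclic ((⊤ : Subgroup G).lowerCentralSeries m))
    (fun m _ hm => ?_) (hn ▸ .bot) (Nat.zero_le n)
  obtain ⟨T, hTfin, hT⟩ := exists_finite_lowerCentralSeries_eq_sup_closure (G := G) m
  rw [hT]
  refine hm.sup_closure (Subgroup.lowerCentralSeries_antitone _ (Nat.le_succ m)) ?_ hTfin
    (hT ▸ subset_closure.trans (SetLike.coe_subset_coe.mpr le_sup_right))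
  exact (commutator_mono le_rfl le_top).trans (Subgroup.lowerCentralSeries_succ _ m).ge

theorem isMulTorsion_center_quotient_center [Group.FG G] (h : IsMulTorsion (center G)) :
    IsMulTorsion (center (G ⧸ center G)) := by
  obtain ⟨S, hS, hSfin⟩ := Group.fg_iff.mp ‹Group.FG G›
  rintro ⟨q, hq⟩
  obtain ⟨g, rfl⟩ := QuotientGroup.mk_surjective q
  have hgs (s : G) : ⁅s, g⁆ ∈ center G := by
    rw [← QuotientGroup.ker_mk' (center G), MonoidHom.mem_ker, map_commutatorElement,
      commutatorElement_eq_one_iff_mul_comm]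
    exact mem_center_iff.mp hq s
  choose m hm hmz using fun s => (h ⟨_, hgs s⟩).exists_pow_eq_one
  set n := ∏ s ∈ hSfin.toFinset, m s
  have hgn : g ^ n ∈ center G := by
    rw [← centralizer_univ, ← coe_top, ← hS, centralizer_closure]
    intro s hs
    have commutator_pow : ⁅s, g⁆ ^ n = 1 := by
      obtain ⟨k, hk⟩ : m s ∣ n := Finset.dvd_prod_of_mem m (hSfin.mem_toFinset.mpr hs)
      have hsm : ⁅s, g⁆ ^ m s = 1 := congrArg Subtype.val (hmz s)
      rw [hk, pow_mul, hsm, one_pow]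
    have comm : Commute ⁅s, g⁆ g := (mem_center_iff.mp (hgs s) g).symm
    -- Since `⁅s, g⁆` is central, `s * g ^ n * s⁻¹ = (⁅s, g⁆ * g) ^ n = ⁅s, g⁆ ^ n * g ^ n`.
    rw [← mul_inv_eq_iff_eq_mul, ← conj_pow, ← MulAut.conj_apply,
      conj_eq_commutatorElement_mul, comm.mul_pow, commutator_pow, one_mul]
  refine isOfFinOrder_iff_pow_eq_one.mpr ⟨n, Finset.prod_pos fun s _ => hm s, Subtype.ext ?_⟩
  exact (QuotientGroup.eq_one_iff _).mpr hgn

theorem isMulTorsion_of_isMulTorsion_center [Group.FG G] [Group.IsNilpotent G]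
    (h : IsMulTorsion (center G)) : IsMulTorsion G := by
  suffices Group.FG G → IsMulTorsion (center G) → IsMulTorsion G from this ‹_› h
  refine Group.nilpotent_center_quotient_ind
    (P := fun G _ _ => Group.FG G → IsMulTorsion (center G) → IsMulTorsion G) G
    (fun G _ _ _ _ g => Subsingleton.elim 1 g ▸ IsOfFinOrder.one) fun G _ _ ih _ hG => ?_
  exact IsMulTorsion.extension_closed (QuotientGroup.ker_mk' (center G)).symm
    (ih inferInstance (isMulTorsion_center_quotient_center hG)) hG

end Polycyclic

section PolycyclicGroupRing

open MonoidAlgebra Subgroup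

universe v

variable (J : Type*) [CommRing J] [IsDomain J] [IsNoetherianRing J] {G : Type*} [Group G]

theorem IsPolycyclic.isNoetherianRing_and_hasGenericSeparation {H : Subgroup G}
    (hH : IsPolycyclic H) :
    IsNoetherianRing (MonoidAlgebra J H) ∧
      HasGenericSeparation.{v} J (MonoidAlgebra J H) := by
  induction hH with
  | bot =>
    have : Module.Finite J (MonoidAlgebra J (⊥ : Subgroup G)) := inferInstance
    exact ⟨isNoetherian_of_tower J inferInstance, hasGenericSeparation_of_finite⟩
  | @sup_zpowers H x _ hx ih =>
    obtain ⟨_, hH⟩ := ih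
    have range_eq : (inclusion le_sup_left).range = H.subgroupOf (H ⊔ zpowers x) :=
      inclusion_range le_sup_left
    have normal : (inclusion (le_sup_left : H ≤ H ⊔ zpowers x)).range.Normal := by
      rw [range_eq, normal_subgroupOf_iff_le_normalizer le_sup_left]
      exact sup_le le_normalizer (zpowers_le.mpr hx)
    have sup_eq_top : (inclusion (le_sup_left : H ≤ H ⊔ zpowers x)).range ⊔
        zpowers ⟨x, mem_sup_right (mem_zpowers x)⟩ = ⊤ := by
      refine map_injective (subtype_injective _) ?_
      rw [Subgroup.map_sup, MonoidHom.map_zpowers, range_eq, subgroupOf_map_subtype,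
        inf_eq_left.mpr le_sup_left, ← MonoidHom.range_eq_map, range_subtype]
      rfl
    exact ⟨isNoetherianRing_monoidAlgebra_of_range_sup_zpowers J normal sup_eq_top,
      hH.monoidAlgebra_of_range_sup_zpowers J normal sup_eq_top⟩

variable (G) [Group.FG G] [Group.IsNilpotent G]

theorem isNoetherianRing_monoidAlgebra_of_isNilpotent : IsNoetherianRing (MonoidAlgebra J G) := by
  have hG := isPolycyclic_top_of_isNilpotent (G := G)
  have := (hG.isNoetherianRing_and_hasGenericSeparation.{0} J).1
  exact isNoetherianRing_of_ringEquiv _ (mapDomainRingEquiv J (topEquiv (G := G)))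

theorem hasGenericSeparation_monoidAlgebra_of_isNilpotent :
    HasGenericSeparation.{v} J (MonoidAlgebra J G) := by
  have hG := isPolycyclic_top_of_isNilpotent (G := G)
  let e : MonoidAlgebra J (⊤ : Subgroup G) ≃ₐ[J] MonoidAlgebra J G := domCongr J J topEquiv
  exact (hG.isNoetherianRing_and_hasGenericSeparation J).2.of_surjective e.toAlgHom e.surjective

end PolycyclicGroupRing

section SimpleModule

universe v

open TensorProduct

theorem exists_prime_not_dvd {J : Type*} [CommRing J] [IsDomain J] [UniqueFactorizationMonoid J]
    (hjac : (⊥ : Ideal J).jacobson = ⊥) (hJ : ¬IsField J) {α : J} (hα : α ≠ 0) :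
    ∃ π : J, Prime π ∧ ¬π ∣ α := by
  have hα : α ∉ (⊥ : Ideal J).jacobson := by rwa [hjac]
  rw [Ideal.jacobson, Ideal.mem_sInf] at hα
  push Not at hα
  obtain ⟨m, ⟨-, hm⟩, hαm⟩ := hα
  obtain ⟨π, hπm, hπ⟩ := hm.isPrime.exists_mem_prime_of_ne_bot
    (Ring.ne_bot_of_isMaximal_of_not_isField hm hJ)
  exact ⟨π, hπ, fun h => hαm (m.mem_of_dvd h hπm)⟩

theorem GenericallySeparated.exists_not_bijective_smul {J W : Type*} [CommRing J] [IsDomain J]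
    [UniqueFactorizationMonoid J] (hjac : (⊥ : Ideal J).jacobson = ⊥) (hJ : ¬IsField J)
    [AddCommGroup W] [Module J W] [Nontrivial W]
    (h : GenericallySeparated (⊥ : Submodule J W) ⊤) :
    ∃ j : J, j ≠ 0 ∧ ¬Function.Bijective (j • · : W → W) := by
  by_contra! hbij
  obtain ⟨α, hα, h⟩ := h
  obtain ⟨π, hπ, hπα⟩ := exists_prime_not_dvd hjac hJ hα
  obtain ⟨w, hw⟩ := exists_ne (0 : W)
  obtain ⟨s, hs, hsw⟩ := (h π hπ hπα).mem_saturation_of_forall_pow w trivial fun n => by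
    obtain ⟨u, rfl⟩ := (hbij _ (pow_ne_zero n hπ.ne_zero)).2 w
    exact le_saturation _ <|
      Submodule.mem_sup_right (Submodule.smul_mem_pointwise_smul u _ _ trivial)
  have hs0 : s ≠ 0 := fun hs0 => hs (hs0 ▸ dvd_zero π)
  exact hw ((hbij s hs0).1 (((Submodule.mem_bot J).mp hsw).trans (smul_zero s).symm))

theorem not_injective_of_hasGenericSeparation {J R : Type*} {V : Type v} [CommRing J] [IsDomain J]
    [UniqueFactorizationMonoid J] (hjac : (⊥ : Ideal J).jacobson = ⊥) (hJ : ¬IsField J) [Ring R]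
    (hR : HasGenericSeparation.{v} J (J ⊗[ℤ] R)) [AddCommGroup V] [Module R V] [IsSimpleModule R V]
    (θ : J →+* Module.End R V) : ¬Function.Injective θ := by
  intro hθ
  let _ : Module J V := Module.compHom V θ
  have : SMulCommClass J R V := ⟨fun j r v => map_smul (θ j) r v⟩
  let _ : Module (J ⊗[ℤ] R) V := TensorProduct.Algebra.module
  have : IsScalarTower J (J ⊗[ℤ] R) V :=
    .of_algebraMap_smul (R := J) (A := J ⊗[ℤ] R) (M := V) fun j v =>
      congrArg (j • ·) (one_smul R v)
  have := IsSimpleModule.nontrivial R V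
  obtain ⟨v, hv⟩ := exists_ne (0 : V)
  have : Module.Finite (J ⊗[ℤ] R) V := by
    refine ⟨{v}, eq_top_iff.mpr fun w _ => ?_⟩
    obtain ⟨r, rfl⟩ := IsSimpleModule.toSpanSingleton_surjective R hv w
    rw [Finset.coe_singleton, Submodule.mem_span_singleton]
    exact ⟨1 ⊗ₜ r, one_smul J (r • v)⟩
  obtain ⟨j, hj, hbij⟩ := (hR V).exists_not_bijective_smul hjac hJ
  exact hbij ((θ j).bijective_of_ne_zero ((map_ne_zero_iff θ hθ).mpr hj))

theorem isOfFinOrder_of_isIntegral {A E : Type*} [CommRing A] [Finite A] [Ring E] [Algebra A E]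
    {u : Eˣ} (hu : IsIntegral A (u : E)) : IsOfFinOrder u := by
  have : Module.Finite A (Algebra.adjoin A {(u : E)}) := .of_fg hu.fg_adjoin_singleton
  have : Finite (Algebra.adjoin A {(u : E)}) := Module.finite_of_finite A
  by_contra h
  let pow (n : ℕ) : Algebra.adjoin A {(u : E)} :=
    ⟨(u : E) ^ n, pow_mem (Algebra.self_mem_adjoin_singleton A (u : E)) n⟩
  refine not_injective_infinite_finite pow fun m n hmn => ?_
  exact injective_pow_iff_not_isOfFinOrder.mpr h (Units.ext (congrArg Subtype.val hmn))

theorem jacobson_bot_int : (⊥ : Ideal ℤ).jacobson = ⊥ := by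
  refine eq_bot_iff.mpr fun x hx => ?_
  have hunit := Ideal.mem_jacobson_bot.mp hx x
  obtain h | h := Int.isUnit_iff.mp hunit
  · exact mul_self_eq_zero.mp (by linarith)
  · nlinarith [mul_self_nonneg x]

theorem tensorProduct_lift_includeRight_surjective (J G : Type*) [CommRing J] [Group G] :
    Function.Surjective (MonoidAlgebra.lift J (J ⊗[ℤ] MonoidAlgebra ℤ G) G
      ((Algebra.TensorProduct.includeRight : MonoidAlgebra ℤ G →ₐ[ℤ] _).toMonoidHom.comp
        (MonoidAlgebra.of ℤ G))) := by
  rw [← AlgHom.range_eq_top, eq_top_iff]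
  rintro x -
  induction x with
  | zero => exact zero_mem _
  | add x y hx hy => exact add_mem hx hy
  | tmul j p =>
    induction p using MonoidAlgebra.induction_linear with
    | zero => rw [tmul_zero]; exact zero_mem _
    | add p q hp hq => rw [tmul_add]; exact add_mem hp hq
    | single g n =>
      refine ⟨MonoidAlgebra.single g (n • j), ?_⟩
      have hn : MonoidAlgebra.single g n = n • MonoidAlgebra.single g (1 : ℤ) := by
        rw [MonoidAlgebra.smul_single, zsmul_one, Int.cast_id]
      rw [hn, ← smul_tmul]
      refine (MonoidAlgebra.lift_single _ _ _).trans ?_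
      change (n • j) • (1 : J) ⊗ₜ[ℤ] MonoidAlgebra.single g (1 : ℤ) = _
      rw [smul_tmul', smul_eq_mul, mul_one]

variable {G : Type*} {V : Type v} [Group G] [Group.FG G] [Group.IsNilpotent G] [AddCommGroup V]
  [Module (MonoidAlgebra ℤ G) V] [IsSimpleModule (MonoidAlgebra ℤ G) V]

theorem not_injective_end_of_isNilpotent {J : Type*} [CommRing J] [IsDomain J]
    [IsPrincipalIdealRing J] (hjac : (⊥ : Ideal J).jacobson = ⊥) (hJ : ¬IsField J)
    (θ : J →+* Module.End (MonoidAlgebra ℤ G) V) : ¬Function.Injective θ :=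
  not_injective_of_hasGenericSeparation hjac hJ
    ((hasGenericSeparation_monoidAlgebra_of_isNilpotent J G).of_surjective _
      (tensorProduct_lift_includeRight_surjective J G)) θ

variable (G V) in
theorem exists_prime_charP_end :
    ∃ p : ℕ, p.Prime ∧ CharP (Module.End (MonoidAlgebra ℤ G) V) p := by
  classical
  have := IsSimpleModule.nontrivial (MonoidAlgebra ℤ G) V
  obtain ⟨p, hp⟩ := CharP.exists (Module.End (MonoidAlgebra ℤ G) V)
  refine ⟨p,
    (CharP.char_is_prime_or_zero (Module.End (MonoidAlgebra ℤ G) V) p).resolve_right ?_, hp⟩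
  rintro rfl
  have := CharP.charP_to_charZero (Module.End (MonoidAlgebra ℤ G) V)
  exact not_injective_end_of_isNilpotent jacobson_bot_int Int.not_isField
    (Int.castRingHom (Module.End (MonoidAlgebra ℤ G) V)) Int.cast_injective

theorem isIntegral_end {k : Type*} [Field k] [Algebra k (Module.End (MonoidAlgebra ℤ G) V)]
    (φ : Module.End (MonoidAlgebra ℤ G) V) : IsIntegral k φ := by
  by_contra hφ
  have hφ : Transcendental k φ := fun h => hφ h.isIntegral
  refine not_injective_end_of_isNilpotent ?_ (Polynomial.not_isField k)
    (Polynomial.aeval φ).toRingHom (transcendental_iff_injective.mp hφ)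
  exact Ideal.jacobson_bot_polynomial_of_jacobson_bot Ideal.jacobson_eq_self_of_isMaximal

theorem isOfFinOrder_of_isSimpleModule {φ : Module.End (MonoidAlgebra ℤ G) V} (hφ : φ ≠ 0) :
    IsOfFinOrder φ := by
  obtain ⟨p, hp, _⟩ := exists_prime_charP_end G V
  have : Fact p.Prime := ⟨hp⟩
  let _ : Algebra (ZMod p) (Module.End (MonoidAlgebra ℤ G) V) := ZMod.algebra _ p
  obtain ⟨u, rfl⟩ := (Module.End.isUnit_iff φ).mpr (φ.bijective_of_ne_zero hφ)
  exact Units.isOfFinOrder_val.mpr (isOfFinOrder_of_isIntegral (A := ZMod p) (isIntegral_end _))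

end SimpleModule

section Monolith

/-- `a` generates the monolith of `M`: it is nonzero and lies in every nonzero submodule. -/
structure IsMonolithGenerator (R : Type*) {M : Type*} [Ring R] [AddCommGroup M] [Module R M]
    (a : M) : Prop where
  ne_zero : a ≠ 0
  mem_of_ne_bot : ∀ N : Submodule R M, N ≠ ⊥ → a ∈ N

namespace IsMonolithGenerator

section Ring

variable {R M : Type*} [Ring R] [AddCommGroup M] [Module R M] {a : M}

theorem isSimpleModule_span (ha : IsMonolithGenerator R a) :
    IsSimpleModule R (Submodule.span R {a}) := by
  refine isSimpleModule_iff_isAtom.mpr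
    ⟨fun h => ha.ne_zero (Submodule.span_singleton_eq_bot.mp h), fun N hN => ?_⟩
  by_contra hne
  exact hN.not_ge ((Submodule.span_singleton_le_iff_mem a N).mpr (ha.mem_of_ne_bot N hne))

theorem isNilpotent_of_apply_eq_zero [IsNoetherian R M] (ha : IsMonolithGenerator R a)
    {ψ : Module.End R M} (h : ψ a = 0) : IsNilpotent ψ := by
  obtain ⟨n, hn⟩ := Filter.eventually_atTop.mp ψ.eventually_disjoint_ker_pow_range_pow
  refine ⟨n + 1, LinearMap.range_eq_bot.mp ?_⟩
  by_contra hne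
  have mem_ker : a ∈ LinearMap.ker (ψ ^ (n + 1)) := by
    rw [LinearMap.mem_ker, pow_succ, Module.End.mul_apply, h, map_zero]
  exact ha.ne_zero (Submodule.disjoint_def.mp (hn (n + 1) n.le_succ) a mem_ker
    (ha.mem_of_ne_bot _ hne))

theorem unit_apply_mem_span (ha : IsMonolithGenerator R a) (u : (Module.End R M)ˣ) :
    ∀ v ∈ Submodule.span R {a}, (u : Module.End R M) v ∈ Submodule.span R {a} := by
  have hu := (Module.End.isUnit_iff (u : Module.End R M)).mp u.isUnit
  refine (Submodule.span_singleton_le_iff_mem a _).mpr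
    (ha.mem_of_ne_bot ((Submodule.span R {a}).comap (u : Module.End R M)) fun h => ?_)
  obtain ⟨b, hb⟩ := hu.2 a
  have mem_comap : b ∈ (Submodule.span R {a}).comap (u : Module.End R M) := by
    rw [Submodule.mem_comap, hb]
    exact Submodule.mem_span_singleton_self a
  rw [h, Submodule.mem_bot] at mem_comap
  exact ha.ne_zero (by rw [← hb, mem_comap, map_zero])

theorem exists_pow_apply_eq (ha : IsMonolithGenerator R a)
    (hV : ∀ φ : Module.End R (Submodule.span R {a}), φ ≠ 0 → IsOfFinOrder φ)
    (u : (Module.End R M)ˣ) : ∃ m, 0 < m ∧ ((u : Module.End R M) ^ m) a = a := by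
  have hu := (Module.End.isUnit_iff (u : Module.End R M)).mp u.isUnit
  let v : Submodule.span R {a} := ⟨a, Submodule.mem_span_singleton_self a⟩
  obtain ⟨m, hm, hpow⟩ := (hV ((u : Module.End R M).restrict (ha.unit_apply_mem_span u))
    fun h => ha.ne_zero <| hu.1 <| (congrArg Subtype.val (DFunLike.congr_fun h v)).trans
      (map_zero _).symm).exists_pow_eq_one
  rw [Module.End.pow_restrict] at hpow
  exact ⟨m, hm, congrArg Subtype.val (DFunLike.congr_fun hpow v)⟩

end Ring

variable {G : Type*} {M : Type*} [Group G] [Group.FG G] [Group.IsNilpotent G] [AddCommGroup M]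
  [Module (MonoidAlgebra ℤ G) M] [Module.Finite (MonoidAlgebra ℤ G) M] {a : M}

theorem exists_neZero_charP_end (ha : IsMonolithGenerator (MonoidAlgebra ℤ G) a) :
    ∃ c : ℕ, NeZero c ∧ CharP (Module.End (MonoidAlgebra ℤ G) M) c := by
  have := isNoetherianRing_monoidAlgebra_of_isNilpotent ℤ G
  have := ha.isSimpleModule_span
  let V := Submodule.span (MonoidAlgebra ℤ G) {a}
  obtain ⟨p, hp, _⟩ := exists_prime_charP_end G V
  have hpa : (p : Module.End (MonoidAlgebra ℤ G) M) a = 0 := congrArg Subtype.val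
    (DFunLike.congr_fun (CharP.cast_eq_zero (Module.End (MonoidAlgebra ℤ G) V) p)
      ⟨a, Submodule.mem_span_singleton_self a⟩)
  obtain ⟨k, hk⟩ := ha.isNilpotent_of_apply_eq_zero hpa
  obtain ⟨c, hc⟩ := CharP.exists (Module.End (MonoidAlgebra ℤ G) M)
  refine ⟨c, ⟨?_⟩, hc⟩
  rintro rfl
  rw [← Nat.cast_pow, CharP.cast_eq_zero_iff (Module.End (MonoidAlgebra ℤ G) M) 0,
    zero_dvd_iff] at hk
  exact pow_ne_zero k hp.ne_zero hk

theorem isOfFinOrder_unit (ha : IsMonolithGenerator (MonoidAlgebra ℤ G) a)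
    (u : (Module.End (MonoidAlgebra ℤ G) M)ˣ) : IsOfFinOrder u := by
  have := isNoetherianRing_monoidAlgebra_of_isNilpotent ℤ G
  have := ha.isSimpleModule_span
  obtain ⟨c, _, _⟩ := ha.exists_neZero_charP_end
  let _ : Algebra (ZMod c) (Module.End (MonoidAlgebra ℤ G) M) := ZMod.algebra _ c
  obtain ⟨m, hm, hua⟩ := ha.exists_pow_apply_eq (fun _ => isOfFinOrder_of_isSimpleModule) u
  obtain ⟨l, hl⟩ := ha.isNilpotent_of_apply_eq_zero
    (ψ := (u : Module.End (MonoidAlgebra ℤ G) M) ^ m - 1)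
    (by rw [LinearMap.sub_apply, hua, Module.End.one_apply, sub_self])
  refine isOfFinOrder_of_isIntegral (A := ZMod c) ⟨(Polynomial.X ^ m - 1) ^ l,
    (Polynomial.monic_X_pow_sub_C 1 hm.ne').pow l, ?_⟩
  rw [← Polynomial.aeval_def, map_pow, map_sub, map_pow, Polynomial.aeval_X, map_one, hl]

end IsMonolithGenerator

section GroupAction

variable (J G : Type*) {M : Type*} [CommRing J] [Group G] [AddCommGroup M]
  [Module (MonoidAlgebra J G) M]

variable (M) in
/-- The action of the group `G` on a module over its group ring, by additive automorphisms. -/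
noncomputable def groupAction : G →* (M ≃ₗ[ℤ] M) :=
  (DistribMulAction.toModuleAut ℤ M (S := (MonoidAlgebra J G)ˣ)).comp (groupUnit J)

variable {J G}

theorem groupAction_apply (g : G) (m : M) :
    groupAction J G M g m = MonoidAlgebra.single g (1 : J) • m :=
  rfl

variable [Module J M] [IsScalarTower J (MonoidAlgebra J G) M]

theorem groupAction_smul_of_commute {g : G}
    (hg : ∀ h, Commute (groupAction J G M g) (groupAction J G M h)) (r : MonoidAlgebra J G)
    (m : M) : groupAction J G M g (r • m) = r • groupAction J G M g m := by
  have := IsScalarTower.to_smulCommClass (R := J) (A := MonoidAlgebra J G) (M := M)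
  induction r using MonoidAlgebra.induction_on with
  | of h => exact DFunLike.congr_fun (hg h) m
  | add r s hr hs => rw [add_smul, add_smul, map_add, hr, hs]
  | smul j r hr =>
    rw [smul_assoc, smul_assoc, ← hr, groupAction_apply, groupAction_apply, smul_comm]

theorem moduleFinite_of_finite_quotient_ker_groupAction [Module.Finite (MonoidAlgebra J G) M]
    [Finite (G ⧸ (groupAction J G M).ker)] : Module.Finite J M := by
  obtain ⟨T, hT⟩ := Module.Finite.fg_top (R := MonoidAlgebra J G) (M := M)
  have span_of : Submodule.span J (Set.range (MonoidAlgebra.of J G)) = ⊤ := by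
    refine eq_top_iff.mpr fun r _ => ?_
    induction r using MonoidAlgebra.induction_on with
    | of g => exact Submodule.subset_span ⟨g, rfl⟩
    | add r s hr hs => exact add_mem (hr trivial) (hs trivial)
    | smul j r hr => exact Submodule.smul_mem _ j (hr trivial)
  have finite_range : (Set.range (groupAction J G M)).Finite := by
    refine (Set.finite_range (QuotientGroup.kerLift (groupAction J G M))).subset ?_
    rintro _ ⟨g, rfl⟩
    exact ⟨g, QuotientGroup.kerLift_mk _ g⟩
  have finite_smul : (Set.range (MonoidAlgebra.of J G) • (T : Set M)).Finite := by
    refine (finite_range.image2 (fun f m => f m) T.finite_toSet).subset ?_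
    rintro _ ⟨_, ⟨g, rfl⟩, t, ht, rfl⟩
    exact ⟨_, ⟨g, rfl⟩, t, ht, rfl⟩
  rw [Module.finite_def, ← Submodule.restrictScalars_top J (MonoidAlgebra J G) M, ← hT,
    ← Submodule.span_smul_of_span_eq_top span_of]
  exact Submodule.fg_span finite_smul

variable (J M) in
/-- The automorphism of a module over the group ring of `G` given by an element of `G` whose action
commutes with that of every other element. -/
noncomputable def centralAutomorphism (g : G)
    (hg : ∀ h, Commute (groupAction J G M g) (groupAction J G M h)) :
    M ≃ₗ[MonoidAlgebra J G] M :=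
  { (groupAction J G M g).toAddEquiv with map_smul' := groupAction_smul_of_commute hg }

end GroupAction

namespace IsMonolithGenerator

variable {G M : Type*} [Group G] [Group.FG G] [Group.IsNilpotent G] [AddCommGroup M]
  [Module (MonoidAlgebra ℤ G) M] [Module.Finite (MonoidAlgebra ℤ G) M] {a : M}

theorem isMulTorsion_center_quotient_ker_groupAction
    (ha : IsMonolithGenerator (MonoidAlgebra ℤ G) a) :
    IsMulTorsion (Subgroup.center (G ⧸ (groupAction ℤ G M).ker)) := by
  rintro ⟨z, hz⟩
  obtain ⟨g, rfl⟩ := QuotientGroup.mk_surjective z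
  have hg : ∀ h, Commute (groupAction ℤ G M g) (groupAction ℤ G M h) := fun h => by
    have := congrArg (QuotientGroup.kerLift (groupAction ℤ G M)) (Subgroup.mem_center_iff.mp hz h)
    rw [map_mul, map_mul, QuotientGroup.kerLift_mk, QuotientGroup.kerLift_mk] at this
    exact this.symm
  obtain ⟨m, hm, hpow⟩ := (ha.isOfFinOrder_unit
    (LinearMap.GeneralLinearGroup.ofLinearEquiv (centralAutomorphism ℤ M g hg))).exists_pow_eq_one
  refine isOfFinOrder_iff_pow_eq_one.mpr ⟨m, hm, Subtype.ext ?_⟩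
  refine (QuotientGroup.eq_one_iff (g ^ m)).mpr
    (MonoidHom.mem_ker.mpr (LinearEquiv.ext fun x => ?_))
  have hx := DFunLike.congr_fun (congrArg Units.val hpow) x
  rw [Units.val_pow_eq_pow_val, Module.End.pow_apply] at hx
  rw [map_pow, LinearEquiv.pow_apply]
  exact hx

theorem finite (ha : IsMonolithGenerator (MonoidAlgebra ℤ G) a) : Finite M := by
  have hQ : IsMulTorsion (G ⧸ (groupAction ℤ G M).ker) :=
    isMulTorsion_of_isMulTorsion_center ha.isMulTorsion_center_quotient_ker_groupAction
  have := Set.finite_univ_iff.mp (isPolycyclic_top_of_isNilpotent.finite_of_isMulTorsion hQ)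
  have : Module.Finite ℤ M := moduleFinite_of_finite_quotient_ker_groupAction (G := G)
  obtain ⟨c, _, _⟩ := ha.exists_neZero_charP_end
  have charP_smul : ∀ m : M, (c : ℤ) • m = 0 := fun m => by
    have hc := CharP.cast_eq_zero (Module.End (MonoidAlgebra ℤ G) M) c
    rw [natCast_zsmul, ← Module.End.natCast_apply (R := MonoidAlgebra ℤ G), hc,
      LinearMap.zero_apply]
  exact Module.finite_of_fg_torsion M fun m =>
    ⟨⟨c, mem_nonZeroDivisors_of_ne_zero (Nat.cast_ne_zero.mpr (NeZero.ne c))⟩, charP_smul m⟩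

end IsMonolithGenerator

theorem exists_notMem_isMonolithGenerator_mkQ {R M : Type*} [Ring R] [AddCommGroup M] [Module R M]
    [IsNoetherian R M] {a : M} (ha : a ≠ 0) :
    ∃ N : Submodule R M, a ∉ N ∧ IsMonolithGenerator R (N.mkQ a) := by
  obtain ⟨N, hN, hmax⟩ := set_has_maximal_iff_noetherian.mpr ‹_› {N : Submodule R M | a ∉ N}
    ⟨⊥, ha⟩
  refine ⟨N, hN, (Submodule.Quotient.mk_eq_zero N).not.mpr hN, fun P hP => ?_⟩
  by_contra haP
  refine hmax (P.comap N.mkQ) haP (lt_of_le_of_ne (N.le_comap_mkQ P) fun h => hP ?_)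
  rw [← Submodule.map_comap_eq_of_surjective N.mkQ_surjective P, ← h, Submodule.mkQ_map_self]

end Monolith

theorem stmt8 (G : Type) [Group G] [Group.FG G] [Group.IsNilpotent G]
    (M : Type) [AddCommGroup M] [Module (MonoidAlgebra ℤ G) M]
    [Module.Finite (MonoidAlgebra ℤ G) M] :
    (⨅ (N : Submodule (MonoidAlgebra ℤ G) M) (_ : Finite (M ⧸ N)), N) = ⊥ := by
  have := isNoetherianRing_monoidAlgebra_of_isNilpotent ℤ G
  refine eq_bot_iff.mpr fun a ha => ?_
  simp only [Submodule.mem_iInf] at ha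
  by_contra hne
  obtain ⟨N, haN, hN⟩ := exists_notMem_isMonolithGenerator_mkQ (R := MonoidAlgebra ℤ G) hne
  exact haN (ha N hN.finite)
end
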